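/- arXiv:2009.10635 — 2 statements merged into one kernel-verified Lean document; each statement's English description precedes it below -/
import Mathlib

section
/- Let μ and μ_n (n ∈ ℕ) be s-graphons. Then the following two conditions are equivalent: (1) for every k ∈ ℕ, the k-shapes C(μ_n,k) converge to C(μ,k) in the Vietoris topology on the hyperspace of compact subsets of the space of real k-by-k matrices; (2) the shapes C(μ_n) converge to C(μ) in the Vietoris topology on the hyperspace of compact subsets of the space of s-graphons with the weak topology. -/
open MeasureTheory Topology Filter

noncomputable section

/-- The unit square `[0,1]²`. -/
abbrev Sq : Type := unitInterval × unitInterval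

/-- Convergence of a sequence of subsets in the Vietoris topology
(upper + lower Vietoris convergence). -/
def VietorisTendsto {X : Type*} [TopologicalSpace X] (A : ℕ → Set X) (B : Set X) : Prop :=
  (∀ U : Set X, IsOpen U → B ⊆ U → ∀ᶠ n in atTop, A n ⊆ U) ∧
  (∀ U : Set X, IsOpen U → (B ∩ U).Nonempty → ∀ᶠ n in atTop, (A n ∩ U).Nonempty)

/-- A measure on the unit square is symmetric if it is invariant under the coordinate swap. -/
def IsSymmSq (μ : Measure Sq) : Prop := μ.map Prod.swap = μ

/-- s-graphons: symmetric Borel probability measures on the unit square,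
with the weak topology. -/
def SGraphon : Type := {μ : ProbabilityMeasure Sq // IsSymmSq (μ : Measure Sq)}

instance : TopologicalSpace SGraphon :=
  inferInstanceAs (TopologicalSpace {μ : ProbabilityMeasure Sq // IsSymmSq (μ : Measure Sq)})

/-- The underlying measure of an s-graphon. -/
def SGraphon.toMeasure (μ : SGraphon) : Measure Sq := (μ.1 : Measure Sq)

/-- A non-negative bounded Borel function on the unit square is fairly distributed
if all its horizontal and vertical sections integrate (w.r.t. Lebesgue measure) to 1. -/
structure FairlyDistributed (f : Sq → ℝ) : Prop where
  measurable : Measurable f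
  nonneg : ∀ p, 0 ≤ f p
  bounded : ∃ C : ℝ, ∀ p, f p ≤ C
  row : ∀ x : unitInterval, ∫ v, f (x, v) = 1
  col : ∀ y : unitInterval, ∫ u, f (u, y) = 1

/-- The density `φ(f,μ)`. -/
def phiFn (f : Sq → ℝ) (μ : Measure Sq) (p : Sq) : ℝ :=
  ∫ q, f (q.1, p.1) * f (q.2, p.2) ∂μ

/-- The measure `Φ(f,μ)`, with density `φ(f,μ)` w.r.t. 2-dimensional Lebesgue measure. -/
def PhiMeas (f : Sq → ℝ) (μ : Measure Sq) : Measure Sq :=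
  volume.withDensity fun p => ENNReal.ofReal (phiFn f μ p)

/-- The shape of a measure `μ` on the unit square: the weak closure of the set of
(s-graphons corresponding to) the measures `Φ(f,μ)`, `f` continuous fairly distributed. -/
def shapeM (μ : Measure Sq) : Set SGraphon :=
  closure {ν : SGraphon | ∃ f : Sq → ℝ, FairlyDistributed f ∧ Continuous f ∧
    ν.toMeasure = PhiMeas f μ}

/-- The shape `C(μ)` of an s-graphon. -/
def shape (μ : SGraphon) : Set SGraphon := shapeM μ.toMeasure

/-- A fractional partition into `k` parts: non-negative Borel functions on `[0,1]`
summing to the constant function 1, each integrating to `1/k`. -/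
def IsFracPartition (k : ℕ) (f : Fin k → unitInterval → ℝ) : Prop :=
  (∀ i, Measurable (f i)) ∧ (∀ i x, 0 ≤ f i x) ∧ (∀ x, ∑ i, f i x = 1) ∧
    ∀ i, ∫ x, f i x = 1 / k

/-- The `k`-shape `C(μ,k)`: the closure in `ℝ^{k×k}` of the set of density matrices of
fractional partitions into `k` parts. -/
def kShape (μ : Measure Sq) (k : ℕ) : Set (Matrix (Fin k) (Fin k) ℝ) :=
  closure {M | ∃ f : Fin k → unitInterval → ℝ, IsFracPartition k f ∧
    ∀ i j, M i j = ∫ p, f i p.1 * f j p.2 ∂μ}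

/-- `M_k^*`: symmetric `k×k` matrices with non-negative entries summing to 1. -/
def Mstar (k : ℕ) : Set (Matrix (Fin k) (Fin k) ℝ) :=
  {M | M.IsSymm ∧ (∀ i j, 0 ≤ M i j) ∧ ∑ i, ∑ j, M i j = 1}

/-- The index `i` (0-based) with `u ∈ [i/k, (i+1)/k)` (and `i = k-1` for `u = 1`). -/
def gridIdx (k : ℕ) (hk : 0 < k) (u : unitInterval) : Fin k :=
  ⟨min ⌊(u : ℝ) * k⌋₊ (k - 1), lt_of_le_of_lt (min_le_right _ _) (Nat.sub_lt hk one_pos)⟩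

/-- The measure `μ_M` associated to a `k×k` matrix `M`: its density w.r.t. 2-dimensional
Lebesgue measure equals `k² M(i,j)` on the square `[i/k,(i+1)/k) × [j/k,(j+1)/k)` (0-based). -/
def muM {k : ℕ} (M : Matrix (Fin k) (Fin k) ℝ) : Measure Sq :=
  if hk : 0 < k then
    volume.withDensity fun p =>
      ENNReal.ofReal ((k : ℝ) ^ 2 * M (gridIdx k hk p.1) (gridIdx k hk p.2))
  else 0

/-- `C̃(μ,k)`: the `k`-shape of `μ`, interpreted as a set of s-graphons. -/
def kShapeTilde (μ : Measure Sq) (k : ℕ) : Set SGraphon :=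
  {ν : SGraphon | ∃ M ∈ kShape μ k, ν.toMeasure = muM M}

/-- The interval `I_i = [i/k, (i+1)/k)` (0-based), with `I_{k-1} = [(k-1)/k, 1]`,
as a subset of `[0,1]`. -/
def Ik (k : ℕ) (i : Fin k) : Set unitInterval :=
  if (i : ℕ) + 1 = k then Subtype.val ⁻¹' Set.Icc (((i : ℕ) : ℝ) / k) 1
  else Subtype.val ⁻¹' Set.Ico (((i : ℕ) : ℝ) / k) ((((i : ℕ) : ℝ) + 1) / k)

theorem viet_transfer {ι : Type*} {X : Type*} [TopologicalSpace X] [CompactSpace X]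
    {Y : ι → Type*} [∀ i, TopologicalSpace (Y i)] [∀ i, RegularSpace (Y i)]
    (p : ∀ i, X → Y i) (t : ∀ i, Y i → X) (hp : ∀ i, Continuous (p i))
    (ht : ∀ i, Continuous (t i))
    (happ : ∀ x : X, ∀ U : Set X, IsOpen U → x ∈ U → ∃ i, t i (p i x) ∈ U)
    (A : ℕ → Set X) (A0 : Set X) (B : ∀ i, ℕ → Set (Y i)) (B0 : ∀ i, Set (Y i))
    (hA0 : IsClosed A0) (hB0 : ∀ i, IsClosed (B0 i))
    (h1 : ∀ i n, ∀ x ∈ A n, p i x ∈ B i n) (h2 : ∀ i, ∀ x ∈ A0, p i x ∈ B0 i)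
    (h3 : ∀ i n, ∀ y ∈ B i n, t i y ∈ A n) (h4 : ∀ i, ∀ y ∈ B0 i, t i y ∈ A0)
    (h : ∀ i, VietorisTendsto (B i) (B0 i)) : VietorisTendsto A A0 := by
  constructor
  · intro U hU hAU
    by_contra hcon
    have hfr : ∃ᶠ n in atTop, ∃ x, x ∈ A n ∧ x ∉ U := by
      refine (not_eventually.1 hcon).mono fun n hn => ?_
      exact Set.not_subset.1 hn
    have : NeBot (atTop ⊓ 𝓟 {n : ℕ | ∃ x, x ∈ A n ∧ x ∉ U}) := frequently_mem_iff_neBot.1 hfr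
    obtain ⟨F, hFle⟩ := Ultrafilter.exists_le (atTop ⊓ 𝓟 {n : ℕ | ∃ x, x ∈ A n ∧ x ∉ U})
    have hF : (F : Filter ℕ) ≤ atTop := hFle.trans inf_le_left
    have hFe : ∀ᶠ n in (F : Filter ℕ), ∃ x, x ∈ A n ∧ x ∉ U :=
      (hFle.trans inf_le_right) (mem_principal_self _)
    have hne : Nonempty X := by
      obtain ⟨n, x, _⟩ := hfr.exists
      exact ⟨x⟩
    have hch : ∀ n, ∃ x, (∃ x, x ∈ A n ∧ x ∉ U) → x ∈ A n ∧ x ∉ U := by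
      intro n
      by_cases hx : ∃ x, x ∈ A n ∧ x ∉ U
      · obtain ⟨x, hx'⟩ := hx
        exact ⟨x, fun _ => hx'⟩
      · exact ⟨hne.some, fun h => absurd h hx⟩
    choose x hx using hch
    have hxF : ∀ᶠ n in (F : Filter ℕ), x n ∈ A n ∧ x n ∉ U := hFe.mono fun n hn => hx n hn
    obtain ⟨a, -, ha⟩ := isCompact_univ.ultrafilter_le_nhds (F.map x) (by simp)
    have ha' : Tendsto x F (𝓝 a) := ha
    have haU : a ∉ U := by
      intro haU
      obtain ⟨n, hn1, hn2⟩ := ((ha'.eventually (hU.mem_nhds haU)).and hxF).exists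
      exact hn2.2 hn1
    apply haU
    apply hAU
    have key : ∀ i, p i a ∈ B0 i := by
      intro i
      by_contra hni
      have hd : Disjoint (𝓝ˢ (B0 i)) (𝓝 (p i a)) :=
        RegularSpace.regular (hB0 i) hni
      obtain ⟨V, hV, W, hW, hVW⟩ := Filter.disjoint_iff.1 hd
      obtain ⟨V', hV'o, hBV', hV'V⟩ := mem_nhdsSet_iff_exists.1 hV
      have e1 := hF ((h i).1 V' hV'o hBV')
      have e2 : ∀ᶠ n in (F : Filter ℕ), p i (x n) ∈ W :=
        (((hp i).tendsto a).comp ha').eventually hW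
      obtain ⟨n, ⟨hn1, hn2⟩, hn3⟩ := ((Filter.Eventually.and e1 e2).and hxF).exists
      exact Set.disjoint_left.1 hVW (hV'V (hn1 (h1 i n _ hn3.1))) hn2
    by_contra hna
    obtain ⟨i, hi⟩ := happ a A0ᶜ hA0.isOpen_compl hna
    exact hi (h4 i _ (key i))
  · rintro U hU ⟨x, hxA, hxU⟩
    obtain ⟨i, hi⟩ := happ x U hU hxU
    refine ((h i).2 (t i ⁻¹' U) (hU.preimage (ht i)) ⟨p i x, h2 i x hxA, hi⟩).mono ?_
    rintro n ⟨y, hyB, hyU⟩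
    exact ⟨t i y, h3 i n y hyB, hyU⟩

theorem viet_subtype {X : Type*} [TopologicalSpace X] (Z : Set X) (A : ℕ → Set X) (B : Set X)
    (hA : ∀ n, A n ⊆ Z) (hB : B ⊆ Z) :
    VietorisTendsto A B ↔
      VietorisTendsto (fun n => (Subtype.val ⁻¹' A n : Set Z)) (Subtype.val ⁻¹' B : Set Z) := by
  constructor
  · rintro ⟨h1, h2⟩
    constructor
    · intro U hU hBU
      obtain ⟨V, hV, rfl⟩ := isOpen_induced_iff.1 hU
      refine (h1 V hV fun x hx => hBU (a := ⟨x, hB hx⟩) hx).mono fun n hn x hx => hn hx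
    · intro U hU hne
      obtain ⟨V, hV, rfl⟩ := isOpen_induced_iff.1 hU
      obtain ⟨x, hx1, hx2⟩ := hne
      refine (h2 V hV ⟨x, hx1, hx2⟩).mono ?_
      rintro n ⟨y, hy1, hy2⟩
      exact ⟨⟨y, hA n hy1⟩, hy1, hy2⟩
  · rintro ⟨h1, h2⟩
    constructor
    · intro U hU hBU
      refine (h1 (Subtype.val ⁻¹' U) (hU.preimage continuous_subtype_val)
        (fun x hx => hBU hx)).mono fun n hn x hx => hn (a := ⟨x, hA n hx⟩) hx
    · rintro U hU ⟨x, hx1, hx2⟩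
      refine (h2 (Subtype.val ⁻¹' U) (hU.preimage continuous_subtype_val)
        ⟨⟨x, hB hx1⟩, hx1, hx2⟩).mono ?_
      rintro n ⟨y, hy1, hy2⟩
      exact ⟨y, hy1, hy2⟩

instance sgraphon_t2 : T2Space SGraphon :=
  inferInstanceAs (T2Space {μ : ProbabilityMeasure Sq // IsSymmSq (μ : Measure Sq)})

instance sgraphon_compact : CompactSpace SGraphon := by
  have hc : IsClosed {μ : ProbabilityMeasure Sq | IsSymmSq (μ : Measure Sq)} := by
    have : {μ : ProbabilityMeasure Sq | IsSymmSq (μ : Measure Sq)} =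
        {μ : ProbabilityMeasure Sq | μ.map (f := Prod.swap) (by fun_prop) = μ} := by
      ext μ
      simp only [Set.mem_ofPred_eq, IsSymmSq]
      rw [← ProbabilityMeasure.toMeasure_injective.eq_iff, ProbabilityMeasure.toMeasure_map]
    rw [this]
    exact isClosed_eq (ProbabilityMeasure.continuous_map continuous_swap) continuous_id
  exact isCompact_iff_compactSpace.1 hc.isCompact

instance SGraphon.isProb (μ : SGraphon) : IsProbabilityMeasure μ.toMeasure :=
  inferInstanceAs (IsProbabilityMeasure (μ.1 : Measure Sq))

theorem Mstar_closed (k : ℕ) : IsClosed (Mstar k) := by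
  have : Mstar k = {M | M.IsSymm} ∩ ((⋂ i, ⋂ j, {M | 0 ≤ M i j}) ∩ {M | ∑ i, ∑ j, M i j = 1}) := by
    ext M
    simp [Mstar]
  rw [this]
  refine IsClosed.inter ?_ (IsClosed.inter ?_ ?_)
  · exact isClosed_eq (by fun_prop) continuous_id
  · refine isClosed_iInter fun i => isClosed_iInter fun j => isClosed_le continuous_const ?_
    fun_prop
  · exact isClosed_eq (by fun_prop) continuous_const

abbrev Mst (k : ℕ) : Type := (Mstar k : Set (Matrix (Fin k) (Fin k) ℝ))

theorem Mstar_compact (k : ℕ) : IsCompact (Mstar k) := by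
  have hK : IsCompact (Set.univ.pi fun _ => Set.univ.pi fun _ => Set.Icc 0 1 :
      Set (Fin k → Fin k → ℝ)) :=
    isCompact_univ_pi fun i => isCompact_univ_pi fun j => isCompact_Icc
  refine IsCompact.of_isClosed_subset (X := Matrix (Fin k) (Fin k) ℝ) hK (Mstar_closed k) ?_
  rintro M ⟨_, h0, h1⟩
  intro i _ j _
  refine ⟨h0 i j, ?_⟩
  rw [← h1]
  calc M i j ≤ ∑ j, M i j := Finset.single_le_sum (fun j _ => h0 i j) (Finset.mem_univ j)
    _ ≤ _ := Finset.single_le_sum (f := fun i => ∑ j, M i j)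
      (fun i _ => Finset.sum_nonneg fun j _ => h0 i j) (Finset.mem_univ i)

instance (k : ℕ) : CompactSpace (Mst k) := isCompact_iff_compactSpace.1 (Mstar_compact k)
instance (k : ℕ) : T2Space (Mst k) := inferInstanceAs (T2Space (Mstar k : Set (Fin k → Fin k → ℝ)))

theorem integrable_bdd {α : Type*} [MeasurableSpace α] {μ : Measure α} [IsFiniteMeasure μ]
    {F : α → ℝ} (hm : Measurable F) (C : ℝ) (hC : ∀ x, |F x| ≤ C) : Integrable F μ :=
  Integrable.of_bound hm.aestronglyMeasurable C (ae_of_all _ hC)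

theorem IsFracPartition.le_one {k : ℕ} {f : Fin k → unitInterval → ℝ} (hf : IsFracPartition k f)
    (i : Fin k) (x : unitInterval) : f i x ≤ 1 := by
  rw [← hf.2.2.1 x]
  exact Finset.single_le_sum (f := fun i => f i x) (fun j _ => hf.2.1 j x) (Finset.mem_univ i)

theorem IsFracPartition.abs_le_one {k : ℕ} {f : Fin k → unitInterval → ℝ}
    (hf : IsFracPartition k f) (i : Fin k) (x : unitInterval) : |f i x| ≤ 1 := by
  rw [abs_of_nonneg (hf.2.1 i x)]
  exact hf.le_one i x

theorem IsFracPartition.integrable_mul {k : ℕ} {f : Fin k → unitInterval → ℝ}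
    (hf : IsFracPartition k f) (μ : Measure Sq) [IsFiniteMeasure μ] (i j : Fin k) :
    Integrable (fun p : Sq => f i p.1 * f j p.2) μ := by
  have h1 := hf.1
  refine integrable_bdd (by fun_prop) 1 fun p => ?_
  rw [abs_mul]
  exact mul_le_one₀ (hf.abs_le_one i _) (abs_nonneg _) (hf.abs_le_one j _)

/-- The matrix of a tuple of functions with respect to a measure. -/
def pairM {k : ℕ} (μ : Measure Sq) (f : Fin k → unitInterval → ℝ) : Matrix (Fin k) (Fin k) ℝ :=
  fun i j => ∫ p, f i p.1 * f j p.2 ∂μ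

theorem pairM_mem {k : ℕ} (ρ : SGraphon) (f : Fin k → unitInterval → ℝ)
    (hf : IsFracPartition k f) : pairM ρ.toMeasure f ∈ Mstar k := by
  have h1 := hf.1
  refine ⟨?_, ?_, ?_⟩
  · ext i j
    have hs : ρ.toMeasure.map Prod.swap = ρ.toMeasure := ρ.2
    change pairM ρ.toMeasure f j i = pairM ρ.toMeasure f i j
    unfold pairM
    conv_lhs => rw [← hs]
    rw [integral_map (by fun_prop)
      (Measurable.aestronglyMeasurable (by fun_prop))]
    refine integral_congr_ae (ae_of_all _ fun p => ?_)
    simp [mul_comm]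
  · intro i j
    exact integral_nonneg fun p => mul_nonneg (hf.2.1 _ _) (hf.2.1 _ _)
  · unfold pairM
    have : ∀ i, ∑ j, ∫ p, f i p.1 * f j p.2 ∂ρ.toMeasure
        = ∫ p, f i p.1 ∂ρ.toMeasure := by
      intro i
      rw [← integral_finsetSum _ (fun j _ => hf.integrable_mul _ i j)]
      refine integral_congr_ae (ae_of_all _ fun p => ?_)
      simp [← Finset.mul_sum, hf.2.2.1]
    simp only [this]
    rw [← integral_finsetSum _ (fun i _ => integrable_bdd (by fun_prop) 1
      (fun p => hf.abs_le_one i _))]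
    simp [hf.2.2.1]

theorem kShape_eq (μ : Measure Sq) (k : ℕ) :
    kShape μ k = closure {M | ∃ f, IsFracPartition k f ∧ M = pairM μ f} := by
  unfold kShape
  congr 1
  ext M
  refine exists_congr fun f => and_congr_right fun _ => ?_
  constructor
  · intro h
    ext i j
    exact h i j
  · rintro rfl i j
    rfl

theorem kShape_subset (μ : SGraphon) (k : ℕ) : kShape μ.toMeasure k ⊆ Mstar k := by
  rw [kShape_eq]
  refine closure_minimal ?_ (Mstar_closed k)
  rintro M ⟨f, hf, rfl⟩
  exact pairM_mem μ f hf

/-- Continuous fractional partitions. -/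
def CFP (k : ℕ) : Type :=
  {h : Fin k → C(unitInterval, ℝ) // IsFracPartition k (fun i x => h i x)}

def CFP.fn {k : ℕ} (h : CFP k) : Fin k → unitInterval → ℝ := fun i x => h.1 i x

theorem CFP.frac {k : ℕ} (h : CFP k) : IsFracPartition k h.fn := h.2

theorem CFP.cont {k : ℕ} (h : CFP k) (i : Fin k) : Continuous (h.fn i) := (h.1 i).continuous

def Pmap {k : ℕ} (h : CFP k) (ρ : SGraphon) : Mst k := ⟨pairM ρ.toMeasure h.fn, pairM_mem ρ _ h.frac⟩

theorem sg_continuous_integral (F : Sq → ℝ) (hF : Continuous F) :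
    Continuous fun ρ : SGraphon => ∫ p, F p ∂ρ.toMeasure := by
  have := ProbabilityMeasure.continuous_integral_continuousMap (⟨F, hF⟩ : C(Sq, ℝ))
  exact this.comp continuous_subtype_val

theorem Pmap_continuous {k : ℕ} (h : CFP k) : Continuous (Pmap h) := by
  refine Continuous.subtype_mk ?_ _
  refine continuous_pi fun i => continuous_pi fun j => ?_
  have := h.cont
  exact sg_continuous_integral (fun p => h.fn i p.1 * h.fn j p.2) (by fun_prop)

/-- step density -/
def dens {k : ℕ} (h : Fin k → unitInterval → ℝ) (M : Matrix (Fin k) (Fin k) ℝ) (p : Sq) : ℝ :=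
  ∑ i, ∑ j, (k : ℝ) ^ 2 * M i j * (h i p.1 * h j p.2)

def densM (D : Sq → ℝ) : Measure Sq := volume.withDensity fun p => ENNReal.ofReal (D p)

theorem integral_densM (D : Sq → ℝ) (hD : Measurable D) (h0 : ∀ p, 0 ≤ D p) (F : Sq → ℝ) :
    ∫ p, F p ∂densM D = ∫ p, D p * F p := by
  unfold densM
  rw [integral_withDensity_eq_integral_toReal_smul (by fun_prop) (by simp)]
  refine integral_congr_ae (ae_of_all _ fun p => ?_)
  simp [ENNReal.toReal_ofReal (h0 p)]

theorem densM_prob (D : Sq → ℝ) (hD : Integrable D) (h0 : ∀ p, 0 ≤ D p) (h1 : ∫ p, D p = 1) :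
    IsProbabilityMeasure (densM D) := by
  constructor
  unfold densM
  rw [withDensity_apply _ MeasurableSet.univ, Measure.restrict_univ,
    ← ofReal_integral_eq_lintegral_ofReal hD (ae_of_all _ h0), h1, ENNReal.ofReal_one]

theorem densM_symm (D : Sq → ℝ) (hD : ∀ p, D p.swap = D p) :
    IsSymmSq (densM D) := by
  unfold IsSymmSq densM
  have hmp : MeasurePreserving (Prod.swap : Sq → Sq) volume volume :=
    Measure.measurePreserving_swap
  ext s hs
  rw [Measure.map_apply measurable_swap hs, withDensity_apply _ (measurable_swap hs),
    withDensity_apply _ hs]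
  have := hmp.setLIntegral_comp_preimage_emb
    (MeasurableEquiv.prodComm (α := unitInterval) (β := unitInterval)).measurableEmbedding
    (fun p => ENNReal.ofReal (D p)) s
  rw [← this]
  simp only [hD]

theorem dens_measurable {k : ℕ} {h : Fin k → unitInterval → ℝ} (hh : IsFracPartition k h)
    (M : Matrix (Fin k) (Fin k) ℝ) : Measurable (dens h M) := by
  have := hh.1
  unfold dens
  fun_prop

theorem dens_nonneg {k : ℕ} {h : Fin k → unitInterval → ℝ} (hh : IsFracPartition k h)
    {M : Matrix (Fin k) (Fin k) ℝ} (hM : M ∈ Mstar k) (p : Sq) : 0 ≤ dens h M p :=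
  Finset.sum_nonneg fun i _ => Finset.sum_nonneg fun j _ =>
    mul_nonneg (mul_nonneg (by positivity) (hM.2.1 i j)) (mul_nonneg (hh.2.1 _ _) (hh.2.1 _ _))

theorem integral_dens_mul {k : ℕ} {h : Fin k → unitInterval → ℝ} (hh : IsFracPartition k h)
    (M : Matrix (Fin k) (Fin k) ℝ) (F : Sq → ℝ) (hF : Measurable F) (C : ℝ)
    (hC : ∀ p, |F p| ≤ C) :
    Integrable (fun p => dens h M p * F p) ∧
    ∫ p, dens h M p * F p = ∑ i, ∑ j, (k : ℝ) ^ 2 * M i j * ∫ p : Sq, h i p.1 * h j p.2 * F p := by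
  have hm := hh.1
  have hint : ∀ i j, Integrable fun p : Sq => (k : ℝ) ^ 2 * M i j * (h i p.1 * h j p.2 * F p) := by
    intro i j
    refine Integrable.const_mul (integrable_bdd (by fun_prop) C fun p => ?_) _
    rw [abs_mul, abs_mul]
    calc |h i p.1| * |h j p.2| * |F p| ≤ 1 * 1 * C := by
          have := hh.abs_le_one i p.1
          have := hh.abs_le_one j p.2
          have := hC p
          gcongr
      _ = C := by ring
  have e : (fun p => dens h M p * F p) =
      fun p => ∑ i, ∑ j, (k : ℝ) ^ 2 * M i j * (h i p.1 * h j p.2 * F p) := by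
    funext p
    simp only [dens, Finset.sum_mul]
    refine Finset.sum_congr rfl fun i _ => Finset.sum_congr rfl fun j _ => by ring
  rw [e]
  constructor
  · exact integrable_finsetSum _ fun i _ => integrable_finsetSum _ fun j _ => hint i j
  · rw [integral_finsetSum _ fun i _ => integrable_finsetSum _ fun j _ => hint i j]
    refine Finset.sum_congr rfl fun i _ => ?_
    rw [integral_finsetSum _ fun j _ => hint i j]
    refine Finset.sum_congr rfl fun j _ => ?_
    rw [integral_const_mul]

theorem integral_prod_frac (f g : unitInterval → ℝ) :
    ∫ p : Sq, f p.1 * g p.2 = (∫ x, f x) * ∫ y, g y :=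
  integral_prod_mul f g

theorem integral_dens {k : ℕ} (hk : 0 < k) {h : Fin k → unitInterval → ℝ}
    (hh : IsFracPartition k h)
    {M : Matrix (Fin k) (Fin k) ℝ} (hM : M ∈ Mstar k) :
    Integrable (dens h M) ∧ ∫ p, dens h M p = 1 := by
  have h1 := integral_dens_mul hh M (fun _ => 1) measurable_const 1 (by simp)
  simp only [mul_one] at h1
  refine ⟨h1.1, ?_⟩
  rw [h1.2, ← hM.2.2]
  refine Finset.sum_congr rfl fun i _ => Finset.sum_congr rfl fun j _ => ?_
  rw [integral_prod_frac, hh.2.2.2, hh.2.2.2]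
  have : (k : ℝ) ≠ 0 := by positivity
  field_simp

theorem dens_swap {k : ℕ} {h : Fin k → unitInterval → ℝ}
    {M : Matrix (Fin k) (Fin k) ℝ} (hM : M ∈ Mstar k) (p : Sq) :
    dens h M p.swap = dens h M p := by
  unfold dens
  rw [Finset.sum_comm]
  refine Finset.sum_congr rfl fun i _ => Finset.sum_congr rfl fun j _ => ?_
  rw [show M j i = M i j from hM.1.apply i j]
  simp [mul_comm]

def Tmap {k : ℕ} (hk : 0 < k) (h : CFP k) (M : Mst k) : SGraphon :=
  ⟨⟨densM (dens h.fn M.1), densM_prob _ (integral_dens hk h.frac M.2).1 (dens_nonneg h.frac M.2)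
    (integral_dens hk h.frac M.2).2⟩, densM_symm _ (dens_swap M.2)⟩

theorem Tmap_toMeasure {k : ℕ} (hk : 0 < k) (h : CFP k) (M : Mst k) :
    (Tmap hk h M).toMeasure = densM (dens h.fn M.1) := rfl

theorem integral_Tmap {k : ℕ} (hk : 0 < k) (h : CFP k) (M : Mst k)
    (F : Sq → ℝ) (hF : Measurable F) (C : ℝ) (hC : ∀ p, |F p| ≤ C) :
    ∫ p, F p ∂(Tmap hk h M).toMeasure =
      ∑ i, ∑ j, (k : ℝ) ^ 2 * M.1 i j * ∫ p : Sq, h.fn i p.1 * h.fn j p.2 * F p := by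
  rw [Tmap_toMeasure, integral_densM _ (dens_measurable h.frac _) (dens_nonneg h.frac M.2),
    (integral_dens_mul h.frac M.1 F hF C hC).2]

theorem exists_bound (F : C(Sq, ℝ)) : ∃ C, 0 ≤ C ∧ ∀ p, |F p| ≤ C :=
  ⟨‖F‖, norm_nonneg _, fun p => F.norm_coe_le_norm p⟩

theorem Tmap_continuous {k : ℕ} (hk : 0 < k) (h : CFP k) : Continuous (Tmap hk h) := by
  have hc : Continuous fun M => (Tmap hk h M).1 := by
    rw [ProbabilityMeasure.continuous_iff_forall_continuousMap_continuous_integral]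
    intro F
    obtain ⟨C, -, hC⟩ := exists_bound F
    have := fun M => integral_Tmap hk h M F F.continuous.measurable C hC
    change Continuous fun M => ∫ p, F p ∂(Tmap hk h M).toMeasure
    simp only [this]
    have hM : ∀ i j, Continuous fun M : Mst k => M.1 i j :=
      fun i j => (continuous_apply_apply i j).comp continuous_subtype_val
    exact continuous_finsetSum _ fun i _ => continuous_finsetSum _ fun j _ =>
      (continuous_const.mul (hM i j)).mul continuous_const
  exact continuous_induced_rng.2 hc

theorem approx_one {k : ℕ} (hk : 0 < k) (g : Fin k → unitInterval → ℝ)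
    (hg : IsFracPartition k g) (θ : Measure unitInterval) [IsFiniteMeasure θ] (d : ℝ) (hd : 0 < d) :
    ∃ c : Fin k → C(unitInterval, ℝ), (∀ i x, 0 ≤ c i x) ∧ (∀ x, ∑ i, c i x = 1) ∧
      ∀ i, ∫ x, |c i x - g i x| ∂θ ≤ d := by
  set m := θ.real Set.univ with hm
  have hm0 : 0 ≤ m := measureReal_nonneg
  have hmeas := hg.1
  set δ := d / ((k + 1) * (1 + m)) with hδ
  have hδ0 : 0 < δ := by positivity
  have hδd : (k + 1) * (δ * (1 + m)) = d := by
    rw [hδ]; field_simp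
  have hgi : ∀ i, Integrable (g i) θ := fun i => integrable_bdd (hmeas i) 1 (hg.abs_le_one i)
  choose b hb hbi using fun i => (hgi i).exists_boundedContinuous_integral_sub_le hδ0
  let a : Fin k → unitInterval → ℝ := fun i x => |b i x| + δ
  have hac : ∀ i, Continuous (a i) := fun i => by fun_prop
  have ha0 : ∀ i x, 0 < a i x := fun i x => by positivity
  have hga_int : ∀ i, Integrable (fun x => |g i x - a i x|) θ := by
    intro i
    refine (Integrable.sub (hgi i) ?_).abs
    exact (hbi i).abs.add (integrable_const δ)
  have hga : ∀ i, ∫ x, |g i x - a i x| ∂θ ≤ δ * (1 + m) := by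
    intro i
    calc ∫ x, |g i x - a i x| ∂θ ≤ ∫ x, (‖g i x - b i x‖ + δ) ∂θ := by
          refine integral_mono (hga_int i) (((hgi i).sub (hbi i)).norm.add (integrable_const δ)) ?_
          intro x
          have h0 := hg.2.1 i x
          have h1 : |g i x - abs (b i x)| ≤ |g i x - b i x| := by
            have := abs_abs_sub_abs_le (g i x) (b i x)
            rwa [abs_of_nonneg h0] at this
          have h2 : |g i x - a i x| ≤ |g i x - abs (b i x)| + |δ| := by
            have : g i x - a i x = (g i x - |b i x|) - δ := by simp only [a]; ring
            rw [this]
            exact abs_sub _ _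
          rw [abs_of_pos hδ0] at h2
          simp only [Real.norm_eq_abs]
          linarith
      _ = (∫ x, ‖g i x - b i x‖ ∂θ) + δ * m := by
          have hi : Integrable (fun x => ‖g i x - b i x‖) θ := ((hgi i).sub (hbi i)).norm
          rw [integral_add hi (integrable_const δ)]
          simp [hm, mul_comm]
      _ ≤ δ * (1 + m) := by
          have := hb i
          linarith
  let s : unitInterval → ℝ := fun x => ∑ i, a i x
  have hsc : Continuous s := by fun_prop
  have hs0 : ∀ x, 0 < s x := by
    intro x
    have : Nonempty (Fin k) := ⟨⟨0, hk⟩⟩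
    exact Finset.sum_pos (fun i _ => ha0 i x) Finset.univ_nonempty
  have hcc : ∀ i, Continuous fun x => a i x / s x := fun i =>
    (hac i).div hsc fun x => (hs0 x).ne'
  refine ⟨fun i => ⟨fun x => a i x / s x, hcc i⟩, ?_, ?_, ?_⟩
  · intro i x
    exact div_nonneg (ha0 i x).le (hs0 x).le
  · intro x
    simp only [ContinuousMap.coe_mk]
    rw [← Finset.sum_div]
    exact div_self (hs0 x).ne'
  · intro i
    simp only [ContinuousMap.coe_mk]
    calc ∫ x, |a i x / s x - g i x| ∂θ
        ≤ ∫ x, ((∑ j, |g j x - a j x|) + |g i x - a i x|) ∂θ := by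
          refine integral_mono ?_ ((integrable_finsetSum _ fun j _ => hga_int j).add (hga_int i)) ?_
          · refine (Integrable.sub ?_ (hgi i)).abs
            refine integrable_bdd (hcc i).measurable 1 fun x => ?_
            rw [abs_of_nonneg (div_nonneg (ha0 i x).le (hs0 x).le), div_le_one (hs0 x)]
            exact Finset.single_le_sum (f := fun i => a i x) (fun j _ => (ha0 j x).le)
              (Finset.mem_univ i)
          · intro x
            have hle : a i x / s x ≤ 1 := by
              rw [div_le_one (hs0 x)]
              exact Finset.single_le_sum (f := fun i => a i x) (fun j _ => (ha0 j x).le)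
                (Finset.mem_univ i)
            have hge : 0 ≤ a i x / s x := div_nonneg (ha0 i x).le (hs0 x).le
            have e1 : a i x / s x - a i x = a i x / s x * (1 - s x) := by
              have := (hs0 x).ne'
              field_simp
            have e2 : 1 - s x = ∑ j, (g j x - a j x) := by
              rw [Finset.sum_sub_distrib, hg.2.2.1 x]
            have e3 : |a i x / s x - a i x| ≤ ∑ j, |g j x - a j x| := by
              rw [e1, abs_mul, abs_of_nonneg hge]
              calc a i x / s x * |1 - s x| ≤ 1 * |1 - s x| := by gcongr
                _ = |∑ j, (g j x - a j x)| := by rw [one_mul, e2]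
                _ ≤ _ := Finset.abs_sum_le_sum_abs _ _
            have e4 := abs_sub_le (a i x / s x) (a i x) (g i x)
            rw [abs_sub_comm (a i x) (g i x)] at e4
            dsimp only
            linarith
      _ = (∑ j, ∫ x, |g j x - a j x| ∂θ) + ∫ x, |g i x - a i x| ∂θ := by
          rw [integral_add (integrable_finsetSum _ fun j _ => hga_int j) (hga_int i),
            integral_finsetSum _ fun j _ => hga_int j]
      _ ≤ (∑ j : Fin k, δ * (1 + m)) + δ * (1 + m) := by
          gcongr with j
          · exact hga j
          · exact hga i
      _ = d := by
          rw [← hδd]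
          simp
          ring

theorem approx_two {k : ℕ} (hk : 0 < k) (g : Fin k → unitInterval → ℝ)
    (hg : IsFracPartition k g) (η : Measure unitInterval) [IsFiniteMeasure η] (ε : ℝ) (hε : 0 < ε) :
    ∃ h : CFP k, ∀ i, ∫ x, |h.fn i x - g i x| ∂η ≤ ε := by
  have hmeas := hg.1
  have hkR : (0 : ℝ) < k := by exact_mod_cast hk
  set m := η.real Set.univ with hm
  have hm0 : 0 ≤ m := measureReal_nonneg
  set d := min (1 / (k : ℝ)) (ε / (1 + (k + 2) * m)) with hd
  have hd0 : 0 < d := by positivity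
  have hd1 : k * d ≤ 1 := by
    have : d ≤ 1 / (k : ℝ) := min_le_left _ _
    rw [le_div_iff₀ hkR] at this
    linarith
  have hd2 : d * (1 + (k + 2) * m) ≤ ε := by
    have : d ≤ ε / (1 + (k + 2) * m) := min_le_right _ _
    rwa [le_div_iff₀ (by positivity)] at this
  obtain ⟨c, hc0, hc1, hcg⟩ := approx_one hk g hg (η + volume) d hd0
  have hcle : ∀ i x, c i x ≤ 1 := fun i x => by
    rw [← hc1 x]
    exact Finset.single_le_sum (f := fun i => c i x) (fun j _ => hc0 j x) (Finset.mem_univ i)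
  have hcabs : ∀ i x, |c i x| ≤ 1 := fun i x => by
    rw [abs_of_nonneg (hc0 i x)]
    exact hcle i x
  have hci : ∀ (ν : Measure unitInterval) [IsFiniteMeasure ν] (i), Integrable (c i) ν :=
    fun ν _ i => integrable_bdd (c i).continuous.measurable 1 (hcabs i)
  have hgi : ∀ (ν : Measure unitInterval) [IsFiniteMeasure ν] (i), Integrable (g i) ν :=
    fun ν _ i => integrable_bdd (hmeas i) 1 (hg.abs_le_one i)
  have hcgi : ∀ (ν : Measure unitInterval) [IsFiniteMeasure ν] (i),
      Integrable (fun x => |c i x - g i x|) ν := fun ν _ i => ((hci ν i).sub (hgi ν i)).abs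
  have hsum : ∀ i, ∫ x, |c i x - g i x| ∂η + ∫ x, |c i x - g i x| ≤ d := fun i => by
    rw [← integral_add_measure (hcgi _ i) (hcgi _ i)]
    exact hcg i
  have hnn : ∀ (ν : Measure unitInterval) i, 0 ≤ ∫ x, |c i x - g i x| ∂ν := fun ν i =>
    integral_nonneg fun x => abs_nonneg _
  let e : Fin k → ℝ := fun i => (∫ x, c i x) - 1 / k
  have he : ∀ i, |e i| ≤ d := by
    intro i
    have : e i = ∫ x, (c i x - g i x) := by
      rw [integral_sub (hci _ i) (hgi _ i), hg.2.2.2]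
    rw [this]
    have h1 := abs_integral_le_integral_abs (f := fun x => c i x - g i x) (μ := volume)
    have h2 := hsum i
    have h3 := hnn η i
    linarith
  have hesum : ∑ i, e i = 0 := by
    simp only [e, Finset.sum_sub_distrib]
    rw [← integral_finsetSum _ fun i _ => hci _ i]
    simp [hc1]
    field_simp
    simp
  let s := (k : ℝ) * d
  have hs0 : 0 ≤ s := by positivity
  have hs1 : s ≤ 1 := hd1
  have hsk : s / k = d := by simp only [s]; field_simp
  let h : Fin k → C(unitInterval, ℝ) := fun i =>
    ⟨fun x => (1 - s) * c i x + (d - (1 - s) * e i), by fun_prop⟩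
  have hmul : ∀ i, |(1 - s) * e i| ≤ d := by
    intro i
    rw [abs_mul, abs_of_nonneg (by linarith)]
    calc (1 - s) * |e i| ≤ 1 * |e i| := by gcongr; linarith
      _ ≤ d := by rw [one_mul]; exact he i
  have hfrac : IsFracPartition k (fun i x => h i x) := by
    refine ⟨fun i => (h i).continuous.measurable, ?_, ?_, ?_⟩
    · intro i x
      have h1 := (abs_le.1 (hmul i)).2
      have h2 : 0 ≤ (1 - s) * c i x := mul_nonneg (by linarith) (hc0 i x)
      simp only [h, ContinuousMap.coe_mk]
      linarith
    · intro x
      simp only [h, ContinuousMap.coe_mk, Finset.sum_add_distrib, Finset.sum_sub_distrib,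
        ← Finset.mul_sum, hc1, hesum]
      simp [s]
    · intro i
      simp only [h, ContinuousMap.coe_mk]
      rw [integral_add ((hci _ i).const_mul _) (integrable_const _), integral_const_mul]
      simp only [integral_const, probReal_univ, one_smul]
      have : ∫ x, c i x = e i + 1 / k := by simp [e]
      rw [this, ← hsk]
      ring
  refine ⟨⟨h, hfrac⟩, fun i => ?_⟩
  change ∫ x, |h i x - g i x| ∂η ≤ ε
  calc ∫ x, |h i x - g i x| ∂η ≤ ∫ x, (|c i x - g i x| + (k + 2) * d) ∂η := by
        refine integral_mono ?_ ((hcgi η i).add (integrable_const _)) ?_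
        · exact (((integrable_bdd (h i).continuous.measurable 1
            (fun x => IsFracPartition.abs_le_one hfrac i x))).sub (hgi η i)).abs
        · intro x
          have e1 : h i x - g i x = (c i x - g i x) + (d - (1 - s) * e i - s * c i x) := by
            simp only [h, ContinuousMap.coe_mk]; ring
          have e2 : |d - (1 - s) * e i - s * c i x| ≤ (k + 2) * d := by
            have h1 := abs_le.1 (hmul i)
            have h2 : s * c i x ≤ s := by
              calc s * c i x ≤ s * 1 := by gcongr; exact hcle i x
                _ = s := mul_one s
            have h3 : 0 ≤ s * c i x := mul_nonneg hs0 (hc0 i x)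
            have h4 : s = k * d := rfl
            rw [abs_le]
            constructor <;> nlinarith
          have e3 := abs_add_le (c i x - g i x) (d - (1 - s) * e i - s * c i x)
          dsimp only
          rw [e1]
          linarith
    _ = (∫ x, |c i x - g i x| ∂η) + (k + 2) * d * m := by
        rw [integral_add (hcgi η i) (integrable_const _)]
        simp [hm, mul_comm]
    _ ≤ d + (k + 2) * d * m := by
        have h2 := hsum i
        have h3 := hnn volume i
        linarith
    _ ≤ ε := by linarith

theorem prod_diff {α : Type*} [MeasurableSpace α] (μ : Measure α) [IsFiniteMeasure μ]
    (u u' v v' w : α → ℝ) (hu : Measurable u) (hu' : Measurable u') (hv : Measurable v)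
    (hv' : Measurable v') (hw : Measurable w) (C : ℝ) (hC : 0 ≤ C)
    (bu : ∀ x, |u x| ≤ 1) (bu' : ∀ x, |u' x| ≤ 1) (bv : ∀ x, |v x| ≤ 1)
    (bv' : ∀ x, |v' x| ≤ 1) (bw : ∀ x, |w x| ≤ C) :
    |∫ x, u x * v x * w x ∂μ - ∫ x, u' x * v' x * w x ∂μ| ≤
      C * (∫ x, |u x - u' x| ∂μ + ∫ x, |v x - v' x| ∂μ) := by
  have b3 : ∀ a b c : ℝ, |a| ≤ 1 → |b| ≤ 1 → |c| ≤ C → |a * b * c| ≤ C := by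
    intro a b c ha hb hc
    rw [abs_mul, abs_mul]
    calc |a| * |b| * |c| ≤ 1 * 1 * C := by gcongr
      _ = C := by ring
  have i1 : Integrable (fun x => u x * v x * w x) μ :=
    integrable_bdd (by fun_prop) C fun x => b3 _ _ _ (bu x) (bv x) (bw x)
  have i2 : Integrable (fun x => u' x * v' x * w x) μ :=
    integrable_bdd (by fun_prop) C fun x => b3 _ _ _ (bu' x) (bv' x) (bw x)
  have i3 : Integrable (fun x => |u x - u' x|) μ :=
    ((integrable_bdd hu 1 bu).sub (integrable_bdd hu' 1 bu')).abs
  have i4 : Integrable (fun x => |v x - v' x|) μ :=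
    ((integrable_bdd hv 1 bv).sub (integrable_bdd hv' 1 bv')).abs
  rw [← integral_sub i1 i2, ← integral_add i3 i4, ← integral_const_mul]
  refine abs_integral_le_integral_abs.trans ?_
  refine integral_mono (i1.sub i2).abs ((i3.add i4).const_mul C) fun x => ?_
  have e : u x * v x * w x - u' x * v' x * w x
      = ((u x - u' x) * v x + u' x * (v x - v' x)) * w x := by ring
  dsimp only
  rw [e, abs_mul, mul_comm]
  have : |(u x - u' x) * v x + u' x * (v x - v' x)| ≤ |u x - u' x| + |v x - v' x| := by
    refine (abs_add_le _ _).trans ?_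
    rw [abs_mul, abs_mul]
    have h1 : |u x - u' x| * |v x| ≤ |u x - u' x| * 1 := by gcongr; exact bv x
    have h2 : |u' x| * |v x - v' x| ≤ 1 * |v x - v' x| := by gcongr; exact bu' x
    linarith
  exact mul_le_mul (bw x) this (abs_nonneg _) hC

theorem approx_three {k : ℕ} (hk : 0 < k) (g : Fin k → unitInterval → ℝ)
    (hg : IsFracPartition k g) (μ : Measure Sq) [IsFiniteMeasure μ] (ε : ℝ) (hε : 0 < ε) :
    ∃ h : CFP k, ∀ i, ∫ p, |h.fn i p.1 - g i p.1| ∂μ ≤ ε ∧ ∫ p, |h.fn i p.2 - g i p.2| ∂μ ≤ ε ∧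
      ∫ x, |h.fn i x - g i x| ≤ ε := by
  obtain ⟨h, hh⟩ := approx_two hk g hg (μ.map Prod.fst + μ.map Prod.snd + volume) ε hε
  refine ⟨h, fun i => ?_⟩
  have m1 := h.frac.1 i
  have m2 := hg.1 i
  have hm : Measurable fun x => |h.fn i x - g i x| := by fun_prop
  have hint : ∀ (ν : Measure unitInterval) [IsFiniteMeasure ν],
      Integrable (fun x => |h.fn i x - g i x|) ν := fun ν _ =>
    ((integrable_bdd m1 1 (h.frac.abs_le_one i)).sub (integrable_bdd m2 1 (hg.abs_le_one i))).abs
  have := hh i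
  rw [integral_add_measure (hint _) (hint _), integral_add_measure (hint _) (hint _),
    integral_map (by fun_prop) hm.aestronglyMeasurable,
    integral_map (by fun_prop) hm.aestronglyMeasurable] at this
  have n1 : 0 ≤ ∫ p, |h.fn i p.1 - g i p.1| ∂μ := integral_nonneg fun p => abs_nonneg _
  have n2 : 0 ≤ ∫ p, |h.fn i p.2 - g i p.2| ∂μ := integral_nonneg fun p => abs_nonneg _
  have n3 : 0 ≤ ∫ x, |h.fn i x - g i x| := integral_nonneg fun p => abs_nonneg _
  refine ⟨by linarith, by linarith, by linarith⟩

theorem pairM_diff {k : ℕ} (μ : Measure Sq) [IsFiniteMeasure μ] (f g : Fin k → unitInterval → ℝ)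
    (hf : IsFracPartition k f) (hg : IsFracPartition k g) (F : Sq → ℝ) (hF : Measurable F) (C : ℝ)
    (hC : 0 ≤ C) (hFC : ∀ p, |F p| ≤ C) (i j : Fin k) :
    |∫ p, f i p.1 * f j p.2 * F p ∂μ - ∫ p, g i p.1 * g j p.2 * F p ∂μ| ≤
      C * (∫ p, |f i p.1 - g i p.1| ∂μ + ∫ p, |f j p.2 - g j p.2| ∂μ) := by
  have h1 := hf.1
  have h2 := hg.1
  exact prod_diff μ (fun p => f i p.1) (fun p => g i p.1) (fun p => f j p.2) (fun p => g j p.2) F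
    (by fun_prop) (by fun_prop) (by fun_prop) (by fun_prop) hF C hC
    (fun p => hf.abs_le_one _ _) (fun p => hg.abs_le_one _ _)
    (fun p => hf.abs_le_one _ _) (fun p => hg.abs_le_one _ _) hFC

theorem pairM_diff_one {k : ℕ} (μ : Measure Sq) [IsFiniteMeasure μ]
    (f g : Fin k → unitInterval → ℝ)
    (hf : IsFracPartition k f) (hg : IsFracPartition k g) (i j : Fin k) :
    |pairM μ f i j - pairM μ g i j| ≤
      (∫ p, |f i p.1 - g i p.1| ∂μ + ∫ p, |f j p.2 - g j p.2| ∂μ) := by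
  have := pairM_diff μ f g hf hg (fun _ => 1) measurable_const 1 zero_le_one (by simp) i j
  simp only [mul_one, one_mul] at this
  exact this

theorem pairM_mem_closure {k : ℕ} (hk : 0 < k) (μ : Measure Sq) [IsFiniteMeasure μ]
    (g : Fin k → unitInterval → ℝ) (hg : IsFracPartition k g) :
    pairM μ g ∈ closure (Set.range fun h : CFP k => pairM μ h.fn) := by
  choose h hh using fun n : ℕ => approx_three hk g hg μ (1 / ((n : ℝ) + 1)) (by positivity)
  refine mem_closure_of_tendsto (f := fun n => pairM μ (h n).fn) (b := atTop) ?_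
    (Eventually.of_forall fun n => ⟨h n, rfl⟩)
  refine tendsto_pi_nhds.2 fun i => tendsto_pi_nhds.2 fun j => ?_
  rw [tendsto_iff_dist_tendsto_zero]
  have hlim : Tendsto (fun n : ℕ => 2 * (1 / ((n : ℝ) + 1))) atTop (𝓝 0) := by
    simpa using tendsto_one_div_add_atTop_nhds_zero_nat.const_mul (2 : ℝ)
  refine squeeze_zero (fun _ => dist_nonneg) (fun n => ?_) hlim
  rw [Real.dist_eq]
  have := pairM_diff_one μ (h n).fn g (h n).frac hg i j
  have h1 := (hh n i).1
  have h2 := (hh n j).2.1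
  linarith

/-- (b): `Tmap` sends the k-shape to the shape. -/
theorem Tmap_mem {k : ℕ} (hk : 0 < k) (h : CFP k) (μ : SGraphon) (M : Mst k)
    (hM : M.1 ∈ kShape μ.toMeasure k) : Tmap hk h M ∈ shape μ := by
  have hkR : (k : ℝ) ≠ 0 := by positivity
  have hcl : M.1 ∈ closure (Set.range fun c : CFP k => pairM μ.toMeasure c.fn) := by
    rw [kShape_eq] at hM
    refine closure_minimal ?_ isClosed_closure hM
    rintro N ⟨f, hf, rfl⟩
    exact pairM_mem_closure hk _ f hf
  have hsub : M ∈ closure (Set.range fun c : CFP k => Pmap c μ) := by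
    rw [closure_subtype]
    convert hcl
    ext N
    simp [Pmap]
  have hc : IsClosed (Tmap hk h ⁻¹' shape μ) :=
    IsClosed.preimage (Tmap_continuous hk h) isClosed_closure
  refine closure_minimal ?_ hc hsub
  rintro _ ⟨c, rfl⟩
  apply subset_closure
  have cm := c.frac.1
  have hm := h.frac.1
  have cc := c.cont
  have hcont := h.cont
  have hsum_le : ∀ p : Sq, ∑ i, c.fn i p.1 * h.fn i p.2 ≤ 1 := by
    intro p
    rw [← h.frac.2.2.1 p.2]
    refine Finset.sum_le_sum fun i _ => ?_
    exact mul_le_of_le_one_left (h.frac.2.1 _ _) (c.frac.le_one _ _)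
  refine ⟨fun p => k * ∑ i, c.fn i p.1 * h.fn i p.2, ⟨by fun_prop, ?_, ⟨k, ?_⟩, ?_, ?_⟩,
    by fun_prop, ?_⟩
  · intro p
    exact mul_nonneg (by positivity) (Finset.sum_nonneg fun i _ =>
      mul_nonneg (c.frac.2.1 _ _) (h.frac.2.1 _ _))
  · intro p
    exact mul_le_of_le_one_right (by positivity) (hsum_le p)
  · intro x
    simp only
    rw [integral_const_mul, integral_finsetSum _ fun i _ =>
      (integrable_bdd (hm i) 1 (h.frac.abs_le_one i)).const_mul _]
    simp only [integral_const_mul, h.frac.2.2.2]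
    rw [← Finset.sum_mul, c.frac.2.2.1]
    field_simp
  · intro x
    simp only
    rw [integral_const_mul, integral_finsetSum _ fun i _ =>
      (integrable_bdd (cm i) 1 (c.frac.abs_le_one i)).mul_const _]
    simp only [integral_mul_const, c.frac.2.2.2]
    rw [← Finset.mul_sum, h.frac.2.2.1]
    field_simp
  · rw [Tmap_toMeasure]
    unfold densM PhiMeas
    congr 1
    funext p
    congr 1
    unfold phiFn dens
    have e : ∀ q : Sq, (k : ℝ) * (∑ i, c.fn i q.1 * h.fn i p.1) *
        (k * ∑ j, c.fn j q.2 * h.fn j p.2) =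
        ∑ i, ∑ j, (k : ℝ) ^ 2 * (h.fn i p.1 * h.fn j p.2) * (c.fn i q.1 * c.fn j q.2) := by
      intro q
      rw [show (k : ℝ) * (∑ i, c.fn i q.1 * h.fn i p.1) * (k * ∑ j, c.fn j q.2 * h.fn j p.2)
        = k ^ 2 * ((∑ i, c.fn i q.1 * h.fn i p.1) * ∑ j, c.fn j q.2 * h.fn j p.2) by ring,
        Finset.sum_mul_sum, Finset.mul_sum]
      refine Finset.sum_congr rfl fun i _ => ?_
      rw [Finset.mul_sum]
      refine Finset.sum_congr rfl fun j _ => by ring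
    simp only [e]
    have hi := fun i j => (c.frac.integrable_mul μ.toMeasure i j).const_mul
      ((k : ℝ) ^ 2 * (h.fn i p.1 * h.fn j p.2))
    rw [integral_finsetSum _ fun i _ => integrable_finsetSum _ fun j _ => hi i j]
    refine Finset.sum_congr rfl fun i _ => ?_
    rw [integral_finsetSum _ fun j _ => hi i j]
    refine Finset.sum_congr rfl fun j _ => ?_
    rw [integral_const_mul]
    simp only [Pmap, pairM]
    ring

/-- (a): `Pmap` sends the shape to the k-shape. -/
theorem Pmap_mem {k : ℕ} (h : CFP k) (μ ρ : SGraphon) (hρ : ρ ∈ shape μ) :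
    (Pmap h ρ).1 ∈ kShape μ.toMeasure k := by
  have hc : IsClosed ((fun ρ => (Pmap h ρ).1) ⁻¹' kShape μ.toMeasure k) :=
    IsClosed.preimage (continuous_subtype_val.comp (Pmap_continuous h)) isClosed_closure
  refine closure_minimal ?_ hc hρ
  rintro ν ⟨f, hf, hfc, hν⟩
  rw [Set.mem_preimage, kShape_eq]
  apply subset_closure
  obtain ⟨C, hC⟩ := hf.bounded
  have hm := h.frac.1
  have hfm := hf.measurable
  have hfa : ∀ p, |f p| ≤ C := fun p => by
    rw [abs_of_nonneg (hf.nonneg p)]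
    exact hC p
  have hC0 : 0 ≤ C := (abs_nonneg _).trans (hfa (0, 0))
  have hfh : ∀ i (p : Sq), |f p * h.fn i p.2| ≤ C := fun i p => by
    rw [abs_mul]
    calc |f p| * |h.fn i p.2| ≤ C * 1 := by
          have := hfa p
          have := h.frac.abs_le_one i p.2
          gcongr
      _ = C := mul_one C
  have hintS : ∀ i x, Integrable fun u => f (x, u) * h.fn i u := fun i x =>
    integrable_bdd (by fun_prop) C fun u => hfh i (x, u)
  have hintP : ∀ i, Integrable (fun p : Sq => f p * h.fn i p.2) := fun i =>
    integrable_bdd (by fun_prop) C (hfh i)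
  refine ⟨fun i x => ∫ u, f (x, u) * h.fn i u, ⟨?_, ?_, ?_, ?_⟩, ?_⟩
  · intro i
    have : Measurable fun p : Sq => f p * h.fn i p.2 := by fun_prop
    exact (this.stronglyMeasurable.integral_prod_right' (ν := volume)).measurable
  · intro i x
    exact integral_nonneg fun u => mul_nonneg (hf.nonneg _) (h.frac.2.1 _ _)
  · intro x
    rw [← integral_finsetSum _ fun i _ => hintS i x]
    simp only [← Finset.mul_sum, h.frac.2.2.1, mul_one]
    exact hf.row x
  · intro i
    rw [integral_integral_swap (f := fun x u => f (x, u) * h.fn i u) (hintP i)]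
    simp only [integral_mul_const, hf.col, one_mul]
    exact h.frac.2.2.2 i
  · have hb2 : ∀ a b : ℝ, |a| ≤ C → |b| ≤ C → |a * b| ≤ C * C := fun a b ha hb => by
      rw [abs_mul]
      gcongr
    have hphim : Measurable (phiFn f μ.toMeasure) := by
      have : Measurable fun z : Sq × Sq => f (z.2.1, z.1.1) * f (z.2.2, z.1.2) := by fun_prop
      exact (this.stronglyMeasurable.integral_prod_right' (ν := μ.toMeasure)).measurable
    have hphi0 : ∀ p, 0 ≤ phiFn f μ.toMeasure p := fun p =>
      integral_nonneg fun q => mul_nonneg (hf.nonneg _) (hf.nonneg _)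
    ext i j
    change ∫ p, h.fn i p.1 * h.fn j p.2 ∂ν.toMeasure = _
    have hν' : ν.toMeasure = densM (phiFn f μ.toMeasure) := hν
    rw [hν', integral_densM _ hphim hphi0]
    unfold pairM phiFn
    simp only [← integral_mul_const]
    have hI : Integrable (Function.uncurry fun (p q : Sq) =>
        f (q.1, p.1) * f (q.2, p.2) * (h.fn i p.1 * h.fn j p.2))
        ((volume : Measure Sq).prod μ.toMeasure) := by
      refine integrable_bdd (by fun_prop) (C * C) fun z => ?_
      have := hb2 _ _ (hfh i (z.2.1, z.1.1)) (hfh j (z.2.2, z.1.2))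
      convert this using 2
      simp only [Function.uncurry]
      ring
    rw [integral_integral_swap hI]
    refine integral_congr_ae (ae_of_all _ fun q => ?_)
    dsimp only
    rw [integral_mul_const, ← integral_prod_frac]
    refine integral_congr_ae (ae_of_all _ fun p => ?_)
    dsimp only
    ring

theorem gridIdx_mem (k : ℕ) (hk : 0 < k) (x : unitInterval) :
    (((gridIdx k hk x : Fin k) : ℕ) : ℝ) ≤ x * k ∧
      (x : ℝ) * k ≤ ((gridIdx k hk x : Fin k) : ℕ) + 1 := by
  have hx0 : 0 ≤ (x : ℝ) * k := mul_nonneg x.2.1 (by positivity)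
  have hx1 : (x : ℝ) * k ≤ k := mul_le_of_le_one_left (by positivity) x.2.2
  simp only [gridIdx]
  constructor
  · refine le_trans ?_ (Nat.floor_le hx0)
    exact_mod_cast min_le_left _ _
  · rcases le_total ⌊(x : ℝ) * k⌋₊ (k - 1) with h | h
    · rw [min_eq_left h]
      exact (Nat.lt_floor_add_one _).le
    · rw [min_eq_right h]
      have : ((k - 1 : ℕ) : ℝ) + 1 = k := by
        exact_mod_cast Nat.sub_add_cancel hk
      linarith

theorem gridIdx_dist (k : ℕ) (hk : 0 < k) (x y : unitInterval)
    (h : gridIdx k hk x = gridIdx k hk y) : dist x y ≤ 1 / k := by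
  have h1 := gridIdx_mem k hk x
  have h2 := gridIdx_mem k hk y
  rw [h] at h1
  have hkR : (0 : ℝ) < k := by exact_mod_cast hk
  rw [Subtype.dist_eq, Real.dist_eq, le_div_iff₀ hkR, ← abs_of_pos hkR, ← abs_mul, abs_le]
  constructor <;> nlinarith

theorem gridIdx_meas (k : ℕ) (hk : 0 < k) (i : Fin k) :
    MeasurableSet {x | gridIdx k hk x = i} := by
  have hm : Measurable fun x : unitInterval => min ⌊(x : ℝ) * k⌋₊ (k - 1) := by
    have h1 : Measurable fun x : unitInterval => ⌊(x : ℝ) * k⌋₊ :=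
      Nat.measurable_floor.comp (by fun_prop)
    exact h1.min measurable_const
  have : {x | gridIdx k hk x = i} =
      (fun x : unitInterval => min ⌊(x : ℝ) * k⌋₊ (k - 1)) ⁻¹' {(i : ℕ)} := by
    ext x
    simp [gridIdx, Fin.ext_iff]
  rw [this]
  exact hm (measurableSet_singleton _)

def sharp (k : ℕ) (hk : 0 < k) (i : Fin k) (x : unitInterval) : ℝ :=
  if gridIdx k hk x = i then 1 else 0

theorem sharp_measurable (k : ℕ) (hk : 0 < k) (i : Fin k) : Measurable (sharp k hk i) :=
  Measurable.ite (gridIdx_meas k hk i) measurable_const measurable_const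

theorem sharp_nonneg (k : ℕ) (hk : 0 < k) (i : Fin k) (x : unitInterval) :
    0 ≤ sharp k hk i x := by
  unfold sharp
  split_ifs <;> simp

theorem sharp_abs (k : ℕ) (hk : 0 < k) (i : Fin k) (x : unitInterval) :
    |sharp k hk i x| ≤ 1 := by
  unfold sharp
  split_ifs <;> simp

theorem sharp_sum (k : ℕ) (hk : 0 < k) (x : unitInterval) : ∑ i, sharp k hk i x = 1 := by
  simp [sharp]

theorem sharp_integral_le (k : ℕ) (hk : 0 < k) (i : Fin k) : ∫ x, sharp k hk i x ≤ 1 / k := by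
  have hkR : (0 : ℝ) < k := by exact_mod_cast hk
  have hi : ((i : ℕ) : ℝ) + 1 ≤ k := by exact_mod_cast i.2
  have e : sharp k hk i = Set.indicator {x | gridIdx k hk x = i} (fun _ => (1 : ℝ)) := by
    funext x
    simp [sharp, Set.indicator]
  rw [e, integral_indicator (gridIdx_meas k hk i)]
  simp only [integral_const, MeasurableSet.univ, measureReal_restrict_apply, Set.univ_inter,
    smul_eq_mul, mul_one]
  let a : unitInterval := ⟨(i : ℕ) / k, by positivity, by rw [div_le_one hkR]; linarith⟩
  let b : unitInterval := ⟨((i : ℕ) + 1) / k, by positivity, by rw [div_le_one hkR]; linarith⟩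
  have hsub : {x | gridIdx k hk x = i} ⊆ Set.Icc a b := by
    intro x hx
    have hx' : gridIdx k hk x = i := hx
    have := gridIdx_mem k hk x
    rw [hx'] at this
    constructor
    · change ((i : ℕ) : ℝ) / k ≤ x
      rw [div_le_iff₀ hkR]
      exact this.1
    · change (x : ℝ) ≤ ((i : ℕ) + 1) / k
      rw [le_div_iff₀ hkR]
      exact this.2
  refine (measureReal_mono hsub).trans ?_
  rw [measureReal_def, unitInterval.volume_Icc]
  have : (b : ℝ) - a = 1 / k := by
    simp only [a, b]
    ring
  rw [this, ENNReal.toReal_ofReal (by positivity)]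

theorem sharp_integral (k : ℕ) (hk : 0 < k) (i : Fin k) : ∫ x, sharp k hk i x = 1 / k := by
  have hkR : (0 : ℝ) < k := by exact_mod_cast hk
  have hs : ∑ i, ∫ x, sharp k hk i x = ∑ i : Fin k, 1 / (k : ℝ) := by
    rw [← integral_finsetSum _ fun i _ =>
      integrable_bdd (sharp_measurable k hk i) 1 (sharp_abs k hk i)]
    simp only [sharp_sum]
    simp
    field_simp
  exact (Finset.sum_eq_sum_iff_of_le fun i _ => sharp_integral_le k hk i).1 hs i
    (Finset.mem_univ i)

theorem sharp_frac (k : ℕ) (hk : 0 < k) : IsFracPartition k (sharp k hk) :=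
  ⟨sharp_measurable k hk, sharp_nonneg k hk, sharp_sum k hk, sharp_integral k hk⟩

theorem sharp_mul (k : ℕ) (hk : 0 < k) (i j : Fin k) :
    ∫ x, sharp k hk i x * sharp k hk j x = if i = j then 1 / (k : ℝ) else 0 := by
  split_ifs with h
  · subst h
    rw [← sharp_integral k hk i]
    refine integral_congr_ae (ae_of_all _ fun x => ?_)
    simp [sharp]
  · rw [← integral_zero unitInterval ℝ (μ := volume)]
    refine integral_congr_ae (ae_of_all _ fun x => ?_)
    simp only [sharp]
    split_ifs with h1 h2 <;> simp
    exact h (h1.symm.trans h2)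

theorem approx_B {k : ℕ} (hk : 0 < k) (M : Mst k) (U : Set (Mst k)) (hU : IsOpen U) (hM : M ∈ U) :
    ∃ h : CFP k, Pmap h (Tmap hk h M) ∈ U := by
  have hkR : (k : ℝ) ≠ 0 := by positivity
  choose h hh using fun n : ℕ => approx_three hk _ (sharp_frac k hk) (volume : Measure Sq)
    (1 / ((n : ℝ) + 1)) (by positivity)
  have hlim : Tendsto (fun n : ℕ => 2 * (1 / ((n : ℝ) + 1))) atTop (𝓝 0) := by
    simpa using tendsto_one_div_add_atTop_nhds_zero_nat.const_mul (2 : ℝ)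
  have hq : ∀ a b, Tendsto (fun n => ∫ x, (h n).fn a x * (h n).fn b x) atTop
      (𝓝 (if a = b then 1 / (k : ℝ) else 0)) := by
    intro a b
    rw [← sharp_mul k hk, tendsto_iff_dist_tendsto_zero]
    refine squeeze_zero (fun _ => dist_nonneg) (fun n => ?_) hlim
    rw [Real.dist_eq]
    have := prod_diff (volume : Measure unitInterval) ((h n).fn a) (sharp k hk a) ((h n).fn b)
      (sharp k hk b) (fun _ => 1) ((h n).frac.1 a) (sharp_measurable _ _ _) ((h n).frac.1 b)
      (sharp_measurable _ _ _) measurable_const 1 zero_le_one ((h n).frac.abs_le_one _)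
      (sharp_abs _ _ _) ((h n).frac.abs_le_one _) (sharp_abs _ _ _) (by simp)
    simp only [mul_one, one_mul] at this
    have h1 := (hh n a).2.2
    have h2 := (hh n b).2.2
    linarith
  have hval : ∀ n i j, (Pmap (h n) (Tmap hk (h n) M)).1 i j = ∑ a, ∑ b, (k : ℝ) ^ 2 * M.1 a b *
      ((∫ x, (h n).fn a x * (h n).fn i x) * ∫ x, (h n).fn b x * (h n).fn j x) := by
    intro n i j
    change ∫ p, (h n).fn i p.1 * (h n).fn j p.2 ∂(Tmap hk (h n) M).toMeasure = _
    have hm := (h n).frac.1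
    rw [integral_Tmap hk (h n) M (fun p => (h n).fn i p.1 * (h n).fn j p.2) (by fun_prop) 1
      (fun p => by
        rw [abs_mul]
        exact mul_le_one₀ ((h n).frac.abs_le_one _ _) (abs_nonneg _)
          ((h n).frac.abs_le_one _ _))]
    refine Finset.sum_congr rfl fun a _ => Finset.sum_congr rfl fun b _ => ?_
    rw [← integral_prod_frac]
    congr 1
    refine integral_congr_ae (ae_of_all _ fun p => ?_)
    dsimp only
    ring
  have hT : Tendsto (fun n => Pmap (h n) (Tmap hk (h n) M)) atTop (𝓝 M) := by
    rw [tendsto_subtype_rng]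
    refine tendsto_pi_nhds.2 fun i => tendsto_pi_nhds.2 fun j => ?_
    simp only [hval]
    have e : M.1 i j = ∑ a, ∑ b, (k : ℝ) ^ 2 * M.1 a b *
        ((if a = i then 1 / (k : ℝ) else 0) * (if b = j then 1 / (k : ℝ) else 0)) := by
      rw [Finset.sum_eq_single i, Finset.sum_eq_single j]
      · simp
        field_simp
      · intro b _ hb
        simp [hb]
      · simp
      · intro a _ ha
        simp [ha]
      · simp
    rw [e]
    exact tendsto_finsetSum _ fun a _ => tendsto_finsetSum _ fun b _ =>
      ((hq a i).mul (hq b j)).const_mul _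
  obtain ⟨n, hn⟩ := (hT.eventually (hU.mem_nhds hM)).exists
  exact ⟨h n, hn⟩

theorem sharp_avg (k : ℕ) (hk : 0 < k) (ρ : SGraphon) (F : C(Sq, ℝ)) (C : ℝ) (hC : 0 ≤ C)
    (hFC : ∀ p, |F p| ≤ C) (δ ω : ℝ) (hω : 0 ≤ ω) (hδ : ∀ p q, dist p q < δ → |F p - F q| ≤ ω)
    (hkδ : 1 / (k : ℝ) < δ) :
    |∑ i, ∑ j, (k : ℝ) ^ 2 * pairM ρ.toMeasure (sharp k hk) i j *
      (∫ p : Sq, sharp k hk i p.1 * sharp k hk j p.2 * F p) - ∫ p, F p ∂ρ.toMeasure| ≤ ω := by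
  have hkR : (0 : ℝ) < k := by exact_mod_cast hk
  have hFm : Measurable F := F.continuous.measurable
  set Q : Fin k → Fin k → ℝ :=
    fun i j => ∫ p : Sq, sharp k hk i p.1 * sharp k hk j p.2 * F p with hQ
  have hsm := sharp_measurable k hk
  let G : Sq → ℝ := fun p => ∑ i, ∑ j, (k : ℝ) ^ 2 * Q i j * (sharp k hk i p.1 * sharp k hk j p.2)
  have hi := fun i j => ((sharp_frac k hk).integrable_mul ρ.toMeasure i j).const_mul
    ((k : ℝ) ^ 2 * Q i j)
  have hGi : Integrable G ρ.toMeasure :=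
    integrable_finsetSum _ fun i _ => integrable_finsetSum _ fun j _ => hi i j
  have hG : ∫ p, G p ∂ρ.toMeasure =
      ∑ i, ∑ j, (k : ℝ) ^ 2 * pairM ρ.toMeasure (sharp k hk) i j * Q i j := by
    simp only [G]
    rw [integral_finsetSum _ fun i _ => integrable_finsetSum _ fun j _ => hi i j]
    refine Finset.sum_congr rfl fun i _ => ?_
    rw [integral_finsetSum _ fun j _ => hi i j]
    refine Finset.sum_congr rfl fun j _ => ?_
    rw [integral_const_mul]
    simp only [pairM]
    ring
  have hFi : Integrable F ρ.toMeasure := integrable_bdd hFm C hFC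
  change |∑ i, ∑ j, (k : ℝ) ^ 2 * pairM ρ.toMeasure (sharp k hk) i j * Q i j - _| ≤ ω
  rw [← hG, ← integral_sub hGi hFi]
  refine abs_integral_le_integral_abs.trans ?_
  have hpt : ∀ p, |G p - F p| ≤ ω := by
    intro p
    have hGp : G p = (k : ℝ) ^ 2 * Q (gridIdx k hk p.1) (gridIdx k hk p.2) := by
      simp [G, sharp]
    set i := gridIdx k hk p.1 with hi0
    set j := gridIdx k hk p.2 with hj0
    have hvol : ∫ q : Sq, sharp k hk i q.1 * sharp k hk j q.2 = 1 / (k : ℝ) ^ 2 := by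
      rw [integral_prod_frac, sharp_integral, sharp_integral]
      field_simp
    have hint : Integrable fun q : Sq => sharp k hk i q.1 * sharp k hk j q.2 :=
      (sharp_frac k hk).integrable_mul _ i j
    have hint2 : Integrable fun q : Sq => sharp k hk i q.1 * sharp k hk j q.2 * F q := by
      refine hint.mul_bdd (c := C) hFm.aestronglyMeasurable (ae_of_all _ hFC)
    have hFp : F p = (k : ℝ) ^ 2 * ∫ q : Sq, sharp k hk i q.1 * sharp k hk j q.2 * F p := by
      rw [integral_mul_const, hvol]
      field_simp
    have e : G p - F p = (k : ℝ) ^ 2 *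
        ∫ q : Sq, sharp k hk i q.1 * sharp k hk j q.2 * (F q - F p) := by
      simp only [mul_sub]
      rw [integral_sub hint2 (hint.mul_const _), mul_sub, ← hFp, hGp]
    rw [e, abs_mul, abs_of_nonneg (by positivity)]
    calc (k : ℝ) ^ 2 * |∫ q : Sq, sharp k hk i q.1 * sharp k hk j q.2 * (F q - F p)|
        ≤ (k : ℝ) ^ 2 * ∫ q : Sq, sharp k hk i q.1 * sharp k hk j q.2 * ω := by
          gcongr
          refine abs_integral_le_integral_abs.trans ?_
          refine integral_mono ?_ (hint.mul_const _) fun q => ?_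
          · have : Integrable fun q : Sq =>
                sharp k hk i q.1 * sharp k hk j q.2 * (F q - F p) := by
              simp only [mul_sub]
              exact hint2.sub (hint.mul_const _)
            exact this.abs
          · dsimp only
            by_cases h1 : gridIdx k hk q.1 = i
            · by_cases h2 : gridIdx k hk q.2 = j
              · simp only [sharp, h1, h2, if_true, one_mul]
                apply hδ
                refine lt_of_le_of_lt ?_ hkδ
                rw [Prod.dist_eq]
                exact max_le (gridIdx_dist k hk _ _ h1) (gridIdx_dist k hk _ _ h2)
              · simp [sharp, h2]
            · simp [sharp, h1]
      _ = ω := by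
          rw [integral_mul_const, hvol]
          field_simp
  calc ∫ p, |G p - F p| ∂ρ.toMeasure ≤ ∫ p, ω ∂ρ.toMeasure :=
        integral_mono (hGi.sub hFi).abs (integrable_const _) hpt
    _ = ω := by simp

theorem approx_A (ρ : SGraphon) (U : Set SGraphon) (hU : IsOpen U) (hρ : ρ ∈ U) :
    ∃ (k : ℕ) (hk : 0 < k) (h : CFP k), Tmap hk h (Pmap h ρ) ∈ U := by
  choose h hh using fun n : ℕ => approx_three n.succ_pos _ (sharp_frac (n + 1) n.succ_pos)
    (ρ.toMeasure + volume) (1 / ((n : ℝ) + 1) ^ 5) (by positivity)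
  suffices hT : Tendsto (fun n => Tmap n.succ_pos (h n) (Pmap (h n) ρ)) atTop (𝓝 ρ) by
    obtain ⟨n, hn⟩ := (hT.eventually (hU.mem_nhds hρ)).exists
    exact ⟨n + 1, n.succ_pos, h n, hn⟩
  have hT : Tendsto (fun n => (Tmap n.succ_pos (h n) (Pmap (h n) ρ)).1) atTop (𝓝 ρ.1) := by
    rw [ProbabilityMeasure.tendsto_iff_forall_integral_tendsto]
    intro F'
    let F : C(Sq, ℝ) := F'.toContinuousMap
    change Tendsto (fun n => ∫ p, F p ∂(Tmap n.succ_pos (h n) (Pmap (h n) ρ)).toMeasure) atTop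
      (𝓝 (∫ p, F p ∂ρ.toMeasure))
    obtain ⟨C, hC, hFC⟩ := exists_bound F
    have hFm : Measurable F := F.continuous.measurable
    let S : ℕ → ℝ := fun n => ∑ i, ∑ j, ((n + 1 : ℕ) : ℝ) ^ 2 *
      pairM ρ.toMeasure (sharp (n + 1) n.succ_pos) i j *
      (∫ p : Sq, sharp (n + 1) n.succ_pos i p.1 * sharp (n + 1) n.succ_pos j p.2 * F p)
    have hS : Tendsto S atTop (𝓝 (∫ p, F p ∂ρ.toMeasure)) := by
      rw [Metric.tendsto_atTop]
      intro ε hε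
      have huc : UniformContinuous F := CompactSpace.uniformContinuous_of_continuous F.continuous
      obtain ⟨δ, hδ, hF⟩ := Metric.uniformContinuous_iff.1 huc (ε / 2) (by positivity)
      obtain ⟨N, hN⟩ := exists_nat_one_div_lt hδ
      refine ⟨N, fun n hn => ?_⟩
      rw [Real.dist_eq]
      refine lt_of_le_of_lt (sharp_avg (n + 1) n.succ_pos ρ F C hC hFC δ (ε / 2) (by positivity)
        (fun p q hpq => (hF hpq).le) ?_) (by linarith)
      refine lt_of_le_of_lt ?_ hN
      push_cast
      gcongr
    have hdiff : ∀ n, |∫ p, F p ∂(Tmap n.succ_pos (h n) (Pmap (h n) ρ)).toMeasure - S n| ≤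
        4 * C * (1 / ((n : ℝ) + 1)) := by
      intro n
      rw [integral_Tmap n.succ_pos (h n) _ F hFm C hFC]
      simp only [S, Pmap]
      rw [← Finset.sum_sub_distrib]
      set K : ℝ := (n : ℝ) + 1 with hK
      have hK0 : 0 < K := by positivity
      have hKc : ((n + 1 : ℕ) : ℝ) = K := by push_cast; rfl
      have hterm : ∀ i j, |((n + 1 : ℕ) : ℝ) ^ 2 * pairM ρ.toMeasure (h n).fn i j *
          (∫ p : Sq, (h n).fn i p.1 * (h n).fn j p.2 * F p) -
          ((n + 1 : ℕ) : ℝ) ^ 2 * pairM ρ.toMeasure (sharp (n + 1) n.succ_pos) i j *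
          (∫ p : Sq, sharp (n + 1) n.succ_pos i p.1 * sharp (n + 1) n.succ_pos j p.2 * F p)| ≤
          4 * C * (1 / K ^ 3) := by
        intro i j
        have hsf := sharp_frac (n + 1) n.succ_pos
        have hsm := hsf.1
        have hm := (h n).frac.1
        have hint1 : ∀ (i) (ν : Measure Sq) [IsFiniteMeasure ν],
            Integrable (fun p : Sq => |(h n).fn i p.1 - sharp (n + 1) n.succ_pos i p.1|) ν :=
          fun i ν _ => ((integrable_bdd (by fun_prop) 1 fun p => (h n).frac.abs_le_one _ _).sub
            (integrable_bdd (by fun_prop) 1 fun p => hsf.abs_le_one _ _)).abs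
        have hint2 : ∀ (i) (ν : Measure Sq) [IsFiniteMeasure ν],
            Integrable (fun p : Sq => |(h n).fn i p.2 - sharp (n + 1) n.succ_pos i p.2|) ν :=
          fun i ν _ => ((integrable_bdd (by fun_prop) 1 fun p => (h n).frac.abs_le_one _ _).sub
            (integrable_bdd (by fun_prop) 1 fun p => hsf.abs_le_one _ _)).abs
        have nn : ∀ (ν : Measure Sq) (f : Sq → ℝ), 0 ≤ ∫ p, |f p| ∂ν :=
          fun ν f => integral_nonneg fun p => abs_nonneg _
        have a1 := (hh n i).1
        have a2 := (hh n j).2.1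
        rw [integral_add_measure (hint1 _ _) (hint1 _ _)] at a1
        rw [integral_add_measure (hint2 _ _) (hint2 _ _)] at a2
        have b1 := nn ρ.toMeasure fun p => (h n).fn i p.1 - sharp (n + 1) n.succ_pos i p.1
        have b2 := nn volume fun p => (h n).fn i p.1 - sharp (n + 1) n.succ_pos i p.1
        have b3 := nn ρ.toMeasure fun p => (h n).fn j p.2 - sharp (n + 1) n.succ_pos j p.2
        have b4 := nn volume fun p => (h n).fn j p.2 - sharp (n + 1) n.succ_pos j p.2
        have d1 := pairM_diff_one ρ.toMeasure _ _ (h n).frac hsf i j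
        have d2 := pairM_diff (volume : Measure Sq) _ _ (h n).frac hsf F hFm C hC hFC i j
        have d1' : |pairM ρ.toMeasure (h n).fn i j -
            pairM ρ.toMeasure (sharp (n + 1) n.succ_pos) i j| ≤ 2 * (1 / K ^ 5) := by linarith
        have d2' := d2.trans (mul_le_mul_of_nonneg_left
          (show _ ≤ 2 * (1 / K ^ 5) by linarith) hC)
        have hP : |pairM ρ.toMeasure (h n).fn i j| ≤ 1 := by
          have := norm_integral_le_of_norm_le_const (μ := ρ.toMeasure)
            (f := fun p => (h n).fn i p.1 * (h n).fn j p.2) (C := 1) (ae_of_all _ fun p => by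
              rw [norm_mul]
              exact mul_le_one₀ ((h n).frac.abs_le_one _ _) (abs_nonneg _)
                ((h n).frac.abs_le_one _ _))
          simpa [pairM] using this
        have hQ : |∫ p : Sq, sharp (n + 1) n.succ_pos i p.1 *
            sharp (n + 1) n.succ_pos j p.2 * F p| ≤ C := by
          have := norm_integral_le_of_norm_le_const (μ := (volume : Measure Sq))
            (f := fun p => sharp (n + 1) n.succ_pos i p.1 * sharp (n + 1) n.succ_pos j p.2 * F p)
            (C := C) (ae_of_all _ fun p => by
              rw [norm_mul, norm_mul]
              calc _ ≤ 1 * 1 * C := mul_le_mul (mul_le_mul (sharp_abs _ _ _ _) (sharp_abs _ _ _ _)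
                    (abs_nonneg _) zero_le_one) (hFC p) (abs_nonneg _) (by norm_num)
                _ = C := by ring)
          simpa using this
        rw [hKc]
        generalize pairM ρ.toMeasure (h n).fn i j = P at *
        generalize pairM ρ.toMeasure (sharp (n + 1) n.succ_pos) i j = P' at *
        generalize (∫ p : Sq, (h n).fn i p.1 * (h n).fn j p.2 * F p) = Q at *
        generalize (∫ p : Sq, sharp (n + 1) n.succ_pos i p.1 *
            sharp (n + 1) n.succ_pos j p.2 * F p) = Q' at *
        have e : K ^ 2 * P * Q - K ^ 2 * P' * Q' = K ^ 2 * (P * (Q - Q') + (P - P') * Q') := by ring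
        rw [e, abs_mul, abs_of_nonneg (by positivity)]
        calc K ^ 2 * |P * (Q - Q') + (P - P') * Q'|
            ≤ K ^ 2 * (1 * (C * (2 * (1 / K ^ 5))) + (2 * (1 / K ^ 5)) * C) := by
              gcongr
              refine (abs_add_le _ _).trans ?_
              rw [abs_mul, abs_mul]
              gcongr
          _ = 4 * C * (1 / K ^ 3) := by
              field_simp
              ring
      calc _ ≤ ∑ i : Fin (n + 1), ∑ j : Fin (n + 1), 4 * C * (1 / K ^ 3) := by
            refine (Finset.abs_sum_le_sum_abs _ _).trans (Finset.sum_le_sum fun i _ => ?_)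
            rw [← Finset.sum_sub_distrib]
            exact (Finset.abs_sum_le_sum_abs _ _).trans (Finset.sum_le_sum fun j _ => hterm i j)
        _ = 4 * C * (1 / K) := by
            simp only [Finset.sum_const, Finset.card_univ, Fintype.card_fin, nsmul_eq_mul]
            rw [hKc]
            field_simp
    have hlim : Tendsto (fun n : ℕ => 4 * C * (1 / ((n : ℝ) + 1))) atTop (𝓝 0) := by
      simpa using tendsto_one_div_add_atTop_nhds_zero_nat.const_mul (4 * C)
    have hd0 : Tendsto (fun n => ∫ p, F p ∂(Tmap n.succ_pos (h n) (Pmap (h n) ρ)).toMeasure - S n)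
        atTop (𝓝 0) := squeeze_zero_norm (fun n => by rw [Real.norm_eq_abs]; exact hdiff n) hlim
    simpa using hd0.add hS
  exact tendsto_subtype_rng.2 hT

/-- Theorem `thm:main`. For s-graphons `μ` and `μₙ`, convergence of all the
`k`-shapes `C(μₙ,k) → C(μ,k)` (in the Vietoris topology on compact subsets of `ℝ^{k×k}`)
is equivalent to convergence of the shapes `C(μₙ) → C(μ)` (in the Vietoris topology on
compact subsets of the space of s-graphons with the weak topology). -/
theorem stmt0 (μ : SGraphon) (μn : ℕ → SGraphon) :
    (∀ k : ℕ, 0 < k →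
      VietorisTendsto (fun n => kShape (μn n).toMeasure k) (kShape μ.toMeasure k)) ↔
    VietorisTendsto (fun n => shape (μn n)) (shape μ) := by
  constructor
  · intro H
    refine viet_transfer (ι := Σ k : {k : ℕ // 0 < k}, CFP k.1) (Y := fun i => Mst i.1.1)
      (fun i => Pmap i.2) (fun i => Tmap i.1.2 i.2) (fun i => Pmap_continuous i.2)
      (fun i => Tmap_continuous i.1.2 i.2) ?_ _ _
      (fun i n => (Subtype.val ⁻¹' kShape (μn n).toMeasure i.1.1 : Set (Mst i.1.1)))
      (fun i => (Subtype.val ⁻¹' kShape μ.toMeasure i.1.1 : Set (Mst i.1.1)))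
      isClosed_closure (fun i => isClosed_closure.preimage continuous_subtype_val)
      (fun i n x hx => Pmap_mem i.2 (μn n) x hx) (fun i x hx => Pmap_mem i.2 μ x hx)
      (fun i n y hy => Tmap_mem i.1.2 i.2 (μn n) y hy) (fun i y hy => Tmap_mem i.1.2 i.2 μ y hy)
      (fun i => (viet_subtype (Mstar i.1.1) _ _ (fun n => kShape_subset (μn n) i.1.1)
        (kShape_subset μ i.1.1)).1 (H i.1.1 i.1.2))
    intro x U hU hx
    obtain ⟨k, hk, h, hm⟩ := approx_A x U hU hx
    exact ⟨⟨⟨k, hk⟩, h⟩, hm⟩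
  · intro H k hk
    rw [viet_subtype (Mstar k) _ _ (fun n => kShape_subset (μn n) k) (kShape_subset μ k)]
    exact viet_transfer (ι := CFP k) (X := Mst k) (Y := fun _ => SGraphon)
      (fun h => Tmap hk h) (fun h => Pmap h) (fun h => Tmap_continuous hk h)
      (fun h => Pmap_continuous h) (fun x U hU hx => approx_B hk x U hU hx) _ _
      (fun _ n => shape (μn n)) (fun _ => shape μ)
      (isClosed_closure.preimage continuous_subtype_val) (fun _ => isClosed_closure)
      (fun h n y hy => Tmap_mem hk h (μn n) y hy) (fun h y hy => Tmap_mem hk h μ y hy)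
      (fun h n x hx => Pmap_mem h (μn n) x hx) (fun h x hx => Pmap_mem h μ x hx)
      (fun _ => H)

end
end

section
/- For every s-graphon μ, the shape C(μ) equals the weak closure of the union over k ∈ ℕ of the sets C̃(μ,k) = {μ_M : M ∈ C(μ,k)}. -/
open MeasureTheory Topology Filter

noncomputable section

lemma sg_tendsto {ν : ℕ → SGraphon} {ν0 : SGraphon} {d : ℕ → Sq → ℝ} {d0 : Sq → ℝ}
    (hm : ∀ n, Measurable (d n)) (hm0 : Measurable d0) (C : ℝ) (hC : ∀ n p, |d n p| ≤ C)
    (hlim : ∀ᵐ p, Tendsto (fun n => d n p) atTop (𝓝 (d0 p)))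
    (hν : ∀ n, (ν n).toMeasure = volume.withDensity (fun p => ENNReal.ofReal (d n p)))
    (hν0 : ν0.toMeasure = volume.withDensity (fun p => ENNReal.ofReal (d0 p))) :
    Tendsto ν atTop (𝓝 ν0) := by
  have hind : Topology.IsInducing (fun a : SGraphon => a.1) := Topology.IsInducing.subtypeVal
  rw [hind.tendsto_nhds_iff, ProbabilityMeasure.tendsto_iff_forall_integral_tendsto]
  intro g
  have key : ∀ (e : Sq → ℝ), Measurable e → ∫ p, g p ∂(volume.withDensity
      (fun p => ENNReal.ofReal (e p))) = ∫ p, max (e p) 0 * g p := by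
    intro e he
    rw [integral_withDensity_eq_integral_toReal_smul (by fun_prop) (by simp)]
    simp [ENNReal.toReal_ofReal']
  have h1 : ∀ n, ∫ p, g p ∂((ν n).1 : Measure Sq) = ∫ p, max (d n p) 0 * g p := by
    intro n
    rw [← key _ (hm n), ← hν n]; rfl
  have h0 : ∫ p, g p ∂(ν0.1 : Measure Sq) = ∫ p, max (d0 p) 0 * g p := by
    rw [← key _ hm0, ← hν0]; rfl
  simp only [Function.comp_apply, h1, h0]
  refine tendsto_integral_of_dominated_convergence (fun _ => C * ‖g‖) ?_ ?_ ?_ ?_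
  · intro n
    have := hm n
    have := g.continuous.measurable
    exact (by fun_prop : Measurable _).aestronglyMeasurable
  · exact integrable_const _
  · intro n
    refine ae_of_all _ fun p => ?_
    rw [norm_mul]
    have hC0 := hC n p
    have : ‖max (d n p) 0‖ ≤ C := by
      rw [Real.norm_eq_abs, abs_of_nonneg (le_max_right _ _)]
      exact max_le ((le_abs_self _).trans hC0) ((abs_nonneg _).trans hC0)
    exact mul_le_mul this (g.norm_coe_le_norm p) (norm_nonneg _) ((norm_nonneg _).trans this)
  · filter_upwards [hlim] with p hp
    exact (hp.max tendsto_const_nhds).mul_const _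

lemma fd_le {f : Sq → ℝ} (hf : FairlyDistributed f) :
    ∃ C : ℝ, 0 ≤ C ∧ ∀ p, |f p| ≤ C := by
  obtain ⟨C, hC⟩ := hf.bounded
  exact ⟨C, (hf.nonneg (0, 0)).trans (hC _), fun p => by
    rw [abs_of_nonneg (hf.nonneg p)]; exact hC p⟩

instance (μ : SGraphon) : IsProbabilityMeasure μ.toMeasure :=
  inferInstanceAs (IsProbabilityMeasure (μ.1 : Measure Sq))

lemma measurable_phi {f : Sq → ℝ} (hf : Measurable f) (μ : SGraphon) :
    Measurable (phiFn f μ.toMeasure) := by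
  have h : Measurable (fun z : Sq × Sq => f (z.2.1, z.1.1) * f (z.2.2, z.1.2)) := by fun_prop
  exact (h.stronglyMeasurable.integral_prod_right).measurable

lemma phi_nonneg {f : Sq → ℝ} (hf : FairlyDistributed f) (μ : SGraphon) (p : Sq) :
    0 ≤ phiFn f μ.toMeasure p :=
  integral_nonneg fun _ => mul_nonneg (hf.nonneg _) (hf.nonneg _)

lemma phi_le {f : Sq → ℝ} {C : ℝ} (hC0 : 0 ≤ C) (hC : ∀ p, |f p| ≤ C) (μ : SGraphon) (p : Sq) :
    |phiFn f μ.toMeasure p| ≤ C * C := by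
  have := norm_integral_le_of_norm_le_const (μ := μ.toMeasure) (C := C * C)
    (f := fun q => f (q.1, p.1) * f (q.2, p.2)) (ae_of_all _ fun q => by
      rw [norm_mul]; exact mul_le_mul (hC _) (hC _) (norm_nonneg _) hC0)
  simpa [phiFn] using this

lemma phi_integral {f : Sq → ℝ} (hf : FairlyDistributed f) (μ : SGraphon) :
    ∫ p, phiFn f μ.toMeasure p = 1 := by
  obtain ⟨C, hC0, hC⟩ := fd_le hf
  have hfm := hf.measurable
  have h : Measurable (fun z : Sq × Sq => f (z.2.1, z.1.1) * f (z.2.2, z.1.2)) := by fun_prop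
  unfold phiFn
  rw [integral_integral_swap]
  · have : ∀ q : Sq, ∫ p : Sq, f (q.1, p.1) * f (q.2, p.2) = 1 := by
      intro q
      have := integral_prod_mul (μ := (volume : Measure unitInterval))
        (ν := (volume : Measure unitInterval)) (fun u => f (q.1, u)) (fun u => f (q.2, u))
      rw [hf.row, hf.row, one_mul] at this
      exact this
    simp [this]
  · refine Integrable.of_bound h.aestronglyMeasurable (C * C) (ae_of_all _ fun z => ?_)
    change ‖f (z.2.1, z.1.1) * f (z.2.2, z.1.2)‖ ≤ C * C
    rw [norm_mul]
    exact mul_le_mul (hC _) (hC _) (norm_nonneg _) hC0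

lemma phi_swap {f : Sq → ℝ} (hf : Measurable f) (μ : SGraphon) (p : Sq) :
    phiFn f μ.toMeasure p.swap = phiFn f μ.toMeasure p := by
  have hs : μ.toMeasure.map Prod.swap = μ.toMeasure := μ.2
  unfold phiFn
  conv_lhs => rw [← hs]
  rw [integral_map measurable_swap.aemeasurable]
  · simp [mul_comm]
  · exact (by fun_prop : Measurable _).aestronglyMeasurable

lemma exists_sg {f : Sq → ℝ} (hf : FairlyDistributed f) (μ : SGraphon) :
    ∃ ν : SGraphon, ν.toMeasure = PhiMeas f μ.toMeasure := by
  have hm := measurable_phi hf.measurable μ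
  obtain ⟨C, hC0, hC⟩ := fd_le hf
  have hp : IsProbabilityMeasure (PhiMeas f μ.toMeasure) := by
    constructor
    rw [PhiMeas, withDensity_apply _ MeasurableSet.univ, Measure.restrict_univ,
      ← ofReal_integral_eq_lintegral_ofReal, phi_integral hf, ENNReal.ofReal_one]
    · exact Integrable.of_bound hm.aestronglyMeasurable (C * C)
        (ae_of_all _ fun z => phi_le hC0 hC μ z)
    · exact ae_of_all _ (phi_nonneg hf μ)
  refine ⟨⟨⟨PhiMeas f μ.toMeasure, hp⟩, ?_⟩, rfl⟩
  change (PhiMeas f μ.toMeasure).map Prod.swap = PhiMeas f μ.toMeasure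
  have hv : (volume : Measure Sq).map Prod.swap = volume := Measure.prod_swap
  ext s hs
  rw [Measure.map_apply measurable_swap hs, PhiMeas, withDensity_apply _ (measurable_swap hs),
    withDensity_apply _ hs]
  conv_rhs => rw [← hv]
  rw [setLIntegral_map hs (by fun_prop) measurable_swap]
  simp_rw [phi_swap hf.measurable]

lemma approx1 (ρ : Measure unitInterval) [IsFiniteMeasure ρ] {f : unitInterval → ℝ}
    (hf : Measurable f) {C : ℝ} (hC : ∀ x, |f x| ≤ C) :
    ∃ g : ℕ → unitInterval → ℝ, (∀ n, Continuous (g n)) ∧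
      ∀ᵐ x ∂ρ, Tendsto (fun n => g n x) atTop (𝓝 (f x)) := by
  have hi : MemLp f 1 ρ := memLp_one_iff_integrable.2
    (Integrable.of_bound hf.aestronglyMeasurable C (ae_of_all _ hC))
  have h : ∀ n : ℕ, ∃ g : BoundedContinuousFunction unitInterval ℝ,
      eLpNorm (f - (g : unitInterval → ℝ)) 1 ρ ≤ ((n : ENNReal))⁻¹ ∧ MemLp g 1 ρ := fun n =>
    hi.exists_boundedContinuous_eLpNorm_sub_le ENNReal.one_ne_top (by simp)
  choose g hg _ using h
  have : TendstoInMeasure ρ (fun n => (g n : unitInterval → ℝ)) atTop f := by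
    refine tendstoInMeasure_of_tendsto_eLpNorm (p := 1) one_ne_zero
      (fun n => (g n).continuous.aestronglyMeasurable) hf.aestronglyMeasurable ?_
    refine tendsto_of_tendsto_of_tendsto_of_le_of_le tendsto_const_nhds
      ENNReal.tendsto_inv_nat_nhds_zero (fun _ => zero_le) (fun n => ?_)
    dsimp only
    rw [eLpNorm_sub_comm]; exact hg n
  obtain ⟨ns, _, h⟩ := this.exists_seq_tendsto_ae
  exact ⟨fun n => g (ns n), fun n => (g _).continuous, h⟩

lemma fp_le {k : ℕ} {f : Fin k → unitInterval → ℝ} (hf : IsFracPartition k f) (i x) :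
    |f i x| ≤ 1 := by
  rw [abs_of_nonneg (hf.2.1 i x), ← hf.2.2.1 x]
  exact Finset.single_le_sum (fun j _ => hf.2.1 j x) (Finset.mem_univ i)

lemma approxP {k : ℕ} (hk : 0 < k) (ρ : Measure unitInterval) [IsFiniteMeasure ρ]
    {f : Fin k → unitInterval → ℝ} (hf : IsFracPartition k f) :
    ∃ g : ℕ → Fin k → unitInterval → ℝ,
      (∀ n, IsFracPartition k (g n)) ∧ (∀ n i, Continuous (g n i)) ∧
      ∀ᵐ x ∂ρ, ∀ i, Tendsto (fun n => g n i x) atTop (𝓝 (f i x)) := by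
  have : Nonempty (Fin k) := ⟨⟨0, hk⟩⟩
  have hk' : (0 : ℝ) < k := by exact_mod_cast hk
  choose g hgc hgl using fun i => approx1 (ρ + volume) (hf.1 i) (fp_le hf i)
  let w : ℕ → Fin k → unitInterval → ℝ := fun n i x => max (g i n x) 0 + 1 / ((n : ℝ) + 1)
  have hw : ∀ n i x, 0 < w n i x := fun n i x =>
    add_pos_of_nonneg_of_pos (le_max_right _ _) (by positivity)
  have hws : ∀ n x, 0 < ∑ j, w n j x := fun n x =>
    Finset.sum_pos (fun j _ => hw n j x) Finset.univ_nonempty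
  have hwc : ∀ n i, Continuous (w n i) := fun n i => by
    have := hgc i n
    fun_prop
  let h : ℕ → Fin k → unitInterval → ℝ := fun n i x => w n i x / ∑ j, w n j x
  have hh0 : ∀ n i x, 0 ≤ h n i x := fun n i x => (div_pos (hw n i x) (hws n x)).le
  have hhs : ∀ n x, ∑ i, h n i x = 1 := fun n x => by
    simp only [h]
    rw [← Finset.sum_div, div_self (hws n x).ne']
  have hh1 : ∀ n i x, h n i x ≤ 1 := fun n i x => by
    rw [← hhs n x]
    exact Finset.single_le_sum (fun j _ => hh0 n j x) (Finset.mem_univ i)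
  have hhc : ∀ n i, Continuous (h n i) := fun n i =>
    (hwc n i).div (continuous_finsetSum _ fun j _ => hwc n j) fun x => (hws n x).ne'
  have hhl : ∀ᵐ x ∂(ρ + volume), ∀ i, Tendsto (fun n => h n i x) atTop (𝓝 (f i x)) := by
    filter_upwards [ae_all_iff.2 hgl] with x hx i
    have hwl : ∀ i, Tendsto (fun n => w n i x) atTop (𝓝 (f i x)) := fun i => by
      have := ((hx i).max (tendsto_const_nhds (x := (0 : ℝ)))).add
        (tendsto_one_div_add_atTop_nhds_zero_nat (𝕜 := ℝ))
      rw [max_eq_left (hf.2.1 i x), add_zero] at this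
      exact this
    have := (hwl i).div (tendsto_finsetSum Finset.univ fun j _ => hwl j)
      (by rw [hf.2.2.1 x]; exact one_ne_zero)
    rw [hf.2.2.1 x, div_one] at this
    exact this
  rw [ae_add_measure_iff] at hhl
  have hhi : ∀ n i, Integrable (h n i) := fun n i =>
    Integrable.of_bound (hhc n i).aestronglyMeasurable 1 (ae_of_all _ fun x => by
      rw [Real.norm_eq_abs, abs_of_nonneg (hh0 n i x)]; exact hh1 n i x)
  let a : ℕ → Fin k → ℝ := fun n i => (∫ x, h n i x) - 1 / k
  have ha : ∀ i, Tendsto (fun n => a n i) atTop (𝓝 0) := fun i => by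
    have : Tendsto (fun n => ∫ x, h n i x) atTop (𝓝 (∫ x, f i x)) := by
      refine tendsto_integral_of_dominated_convergence (fun _ => 1)
        (fun n => (hhc n i).aestronglyMeasurable) (integrable_const _)
        (fun n => ae_of_all _ fun x => ?_) ?_
      · rw [Real.norm_eq_abs, abs_of_nonneg (hh0 n i x)]; exact hh1 n i x
      · filter_upwards [hhl.2] with x hx using hx i
    have := this.sub_const (1 / (k : ℝ))
    rwa [hf.2.2.2 i, sub_self] at this
  have has : ∀ n, ∑ i, a n i = 0 := fun n => by
    simp only [a]
    rw [Finset.sum_sub_distrib, ← integral_finsetSum _ fun i _ => hhi n i]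
    simp [hhs, hk'.ne']
  let s : ℕ → ℝ := fun n => ∑ i, |a n i|
  have hs : Tendsto s atTop (𝓝 0) := by
    have := tendsto_finsetSum Finset.univ fun i _ => (ha i).abs
    simpa using this
  have hs0 : ∀ n, 0 ≤ s n := fun n => Finset.sum_nonneg fun i _ => abs_nonneg _
  have hsa : ∀ n i, a n i ≤ s n := fun n i => (le_abs_self _).trans
    (Finset.single_le_sum (f := fun i => |a n i|) (fun j _ => abs_nonneg _) (Finset.mem_univ i))
  have hd : ∀ n, 0 < 1 + k * s n := fun n => by have := hs0 n; positivity
  refine ⟨fun n i x => (h n i x + (s n - a n i)) / (1 + k * s n), fun n => ⟨?_, ?_, ?_, ?_⟩, ?_, ?_⟩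
  · intro i
    have := (hhc n i).measurable
    fun_prop
  · intro i x
    exact div_nonneg (add_nonneg (hh0 n i x) (sub_nonneg.2 (hsa n i))) (hd n).le
  · intro x
    rw [← Finset.sum_div, Finset.sum_add_distrib, Finset.sum_sub_distrib, hhs, has]
    simp [(hd n).ne']
  · intro i
    rw [integral_div, integral_add (hhi n i) (integrable_const _)]
    have : ∫ x, h n i x = a n i + 1 / k := by simp [a]
    rw [this]
    have := (hd n).ne'
    simp only [integral_const, probReal_univ, one_smul]
    field_simp
    ring
  · intro n i
    have := hhc n i
    fun_prop
  · filter_upwards [hhl.1] with x hx i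
    have := ((hx i).add (hs.sub (ha i))).div ((hs.const_mul (k : ℝ)).const_add 1) (by simp)
    simp only [sub_zero, add_zero, mul_zero, div_one] at this
    exact this

lemma gridIdx_bounds {k : ℕ} (hk : 0 < k) (u : unitInterval) :
    ((gridIdx k hk u : ℕ) : ℝ) / k ≤ u ∧ (u : ℝ) ≤ (((gridIdx k hk u : ℕ) : ℝ) + 1) / k := by
  have hk' : (0 : ℝ) < k := by exact_mod_cast hk
  have hu : 0 ≤ (u : ℝ) * k := mul_nonneg u.2.1 hk'.le
  rw [div_le_iff₀ hk', le_div_iff₀ hk']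
  constructor
  · refine le_trans ?_ (Nat.floor_le hu)
    exact_mod_cast min_le_left _ _
  · by_cases h : ⌊(u : ℝ) * k⌋₊ ≤ k - 1
    · have : (gridIdx k hk u : ℕ) = ⌊(u : ℝ) * k⌋₊ := min_eq_left h
      rw [this]
      exact (Nat.lt_floor_add_one _).le
    · have : (gridIdx k hk u : ℕ) = k - 1 := min_eq_right (le_of_not_ge h)
      have h2 : ((gridIdx k hk u : ℕ) : ℝ) + 1 = k := by
        rw [this]; exact_mod_cast Nat.sub_add_cancel hk
      rw [h2]
      have := mul_le_mul_of_nonneg_right u.2.2 hk'.le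
      linarith

lemma gridIdx_eq {k : ℕ} (hk : 0 < k) (i : Fin k) (u : unitInterval)
    (h1 : ((i : ℕ) : ℝ) / k < u) (h2 : (u : ℝ) < (((i : ℕ) : ℝ) + 1) / k) :
    gridIdx k hk u = i := by
  have hk' : (0 : ℝ) < k := by exact_mod_cast hk
  rw [div_lt_iff₀ hk'] at h1
  rw [lt_div_iff₀ hk'] at h2
  have : ⌊(u : ℝ) * k⌋₊ = i := by
    rw [Nat.floor_eq_iff ((Nat.cast_nonneg _).trans h1.le)]
    exact ⟨h1.le, h2⟩
  ext
  simp only [gridIdx, this]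
  have := i.2
  omega

lemma gridIdx_measurable {k : ℕ} (hk : 0 < k) : Measurable (gridIdx k hk) := by
  have h : Measurable (fun u : unitInterval => min ⌊(u : ℝ) * k⌋₊ (k - 1)) := by
    have : Measurable (fun u : unitInterval => ⌊(u : ℝ) * k⌋₊) :=
      Nat.measurable_floor.comp (by fun_prop)
    exact this.min measurable_const
  refine measurable_to_countable' fun i => ?_
  have : gridIdx k hk ⁻¹' {i} =
      (fun u : unitInterval => min ⌊(u : ℝ) * k⌋₊ (k - 1)) ⁻¹' {(i : ℕ)} := by
    ext u
    simp only [Set.mem_preimage, Set.mem_singleton_iff, Fin.ext_iff, gridIdx]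
  rw [this]
  exact h (measurableSet_singleton _)

lemma gridIdx_vol {k : ℕ} (hk : 0 < k) (i : Fin k) :
    (volume : Measure unitInterval).real (gridIdx k hk ⁻¹' {i}) = 1 / k := by
  have hk' : (0 : ℝ) < k := by exact_mod_cast hk
  have hi : ((i : ℕ) : ℝ) + 1 ≤ k := by exact_mod_cast i.2
  have hi0 : (0 : ℝ) ≤ ((i : ℕ) : ℝ) := Nat.cast_nonneg _
  let a : unitInterval := ⟨((i : ℕ) : ℝ) / k, by positivity, by rw [div_le_one hk']; linarith⟩
  let b : unitInterval := ⟨(((i : ℕ) : ℝ) + 1) / k, by positivity, by rw [div_le_one hk']; linarith⟩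
  have hab : (b : ℝ) - a = 1 / k := by simp only [a, b]; ring
  have h1 : Set.Ioo a b ⊆ gridIdx k hk ⁻¹' {i} := fun u hu => gridIdx_eq hk i u hu.1 hu.2
  have h2 : gridIdx k hk ⁻¹' {i} ⊆ Set.Icc a b := fun u hu => by
    have := gridIdx_bounds hk u
    rw [show gridIdx k hk u = i from hu] at this
    exact this
  have : volume (gridIdx k hk ⁻¹' {i}) = ENNReal.ofReal (1 / k) := by
    apply le_antisymm
    · refine (measure_mono h2).trans ?_
      rw [unitInterval.volume_Icc, hab]
    · refine le_trans ?_ (measure_mono h1)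
      rw [unitInterval.volume_Ioo, hab]
  rw [measureReal_def, this, ENNReal.toReal_ofReal (by positivity)]

lemma integral_fiber {k : ℕ} (hk : 0 < k) {f : unitInterval → ℝ} (hf : Integrable f) :
    ∑ i, ∫ v in gridIdx k hk ⁻¹' {i}, f v = ∫ v, f v := by
  rw [← integral_iUnion_fintype (fun i => gridIdx_measurable hk (measurableSet_singleton i))]
  · have : (⋃ i, gridIdx k hk ⁻¹' {i}) = Set.univ := by
      ext u
      simp
    rw [this, Measure.restrict_univ]
  · intro i j hij
    exact Disjoint.preimage _ (by simpa using hij)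
  · exact fun i => hf.integrableOn

lemma integral_step {k : ℕ} (hk : 0 < k) (c : Fin k → ℝ) :
    ∫ v, c (gridIdx k hk v) = ∑ i, c i * (1 / k) := by
  have hm : Measurable (fun v => c (gridIdx k hk v)) :=
    (measurable_of_finite c).comp (gridIdx_measurable hk)
  rw [← integral_fiber hk]
  · refine Finset.sum_congr rfl fun i _ => ?_
    rw [setIntegral_congr_fun (g := fun _ => c i)
      (gridIdx_measurable hk (measurableSet_singleton i))
      (fun v hv => by rw [show gridIdx k hk v = i from hv])]
    rw [setIntegral_const, gridIdx_vol, smul_eq_mul, mul_comm]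
  · refine Integrable.of_bound hm.aestronglyMeasurable (∑ i, |c i|) (ae_of_all _ fun v => ?_)
    exact Finset.single_le_sum (f := fun i => |c i|) (fun _ _ => abs_nonneg _) (Finset.mem_univ _)

/-- The step kernel of a fractional partition. -/
def stepK {k : ℕ} (hk : 0 < k) (f : Fin k → unitInterval → ℝ) (p : Sq) : ℝ :=
  k * f (gridIdx k hk p.2) p.1

lemma stepK_fair {k : ℕ} (hk : 0 < k) {f : Fin k → unitInterval → ℝ} (hf : IsFracPartition k f) :
    FairlyDistributed (stepK hk f) := by
  have hk' : (0 : ℝ) < k := by exact_mod_cast hk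
  refine ⟨?_, ?_, ⟨k, ?_⟩, ?_, ?_⟩
  · have h : Measurable (fun z : Fin k × unitInterval => f z.1 z.2) :=
      measurable_from_prod_countable_right hf.1
    exact (h.comp (((gridIdx_measurable hk).comp measurable_snd).prodMk measurable_fst)).const_mul _
  · exact fun p => mul_nonneg hk'.le (hf.2.1 _ _)
  · intro p
    have := (le_abs_self _).trans (fp_le hf (gridIdx k hk p.2) p.1)
    exact mul_le_of_le_one_right hk'.le this
  · intro x
    have := integral_step hk (fun i => k * f i x)
    simp only [stepK]
    rw [this, ← Finset.sum_mul, ← Finset.mul_sum, hf.2.2.1]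
    field_simp
  · intro y
    simp only [stepK]
    rw [integral_const_mul, hf.2.2.2]
    field_simp

lemma stepK_phi {k : ℕ} (hk : 0 < k) (f : Fin k → unitInterval → ℝ) (μ : Measure Sq)
    (M : Matrix (Fin k) (Fin k) ℝ) (hM : ∀ i j, M i j = ∫ p, f i p.1 * f j p.2 ∂μ) :
    muM M = PhiMeas (stepK hk f) μ := by
  unfold muM PhiMeas
  rw [dif_pos hk]
  congr 1
  ext p
  congr 1
  rw [hM, ← integral_const_mul]
  unfold phiFn stepK
  congr 1
  ext q
  ring

lemma dir1 (μ : SGraphon) {f : Sq → ℝ} (hf : FairlyDistributed f) (hc : Continuous f)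
    {ν : SGraphon} (hν : ν.toMeasure = PhiMeas f μ.toMeasure) :
    ν ∈ closure (⋃ k ∈ {k : ℕ | 0 < k}, kShapeTilde μ.toMeasure k) := by
  obtain ⟨C, hC0, hC⟩ := fd_le hf
  have hint : ∀ x, Integrable (fun v => f (x, v)) := fun x =>
    Integrable.of_bound (by fun_prop : Continuous _).aestronglyMeasurable C
      (ae_of_all _ fun v => hC _)
  let g : (n : ℕ) → Fin (n + 1) → unitInterval → ℝ := fun n i x =>
    ∫ v in gridIdx (n + 1) n.succ_pos ⁻¹' {i}, f (x, v)
  have hg : ∀ n, IsFracPartition (n + 1) (g n) := by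
    intro n
    refine ⟨fun i => ?_, fun i x => ?_, fun x => ?_, fun i => ?_⟩
    · have h : StronglyMeasurable (Function.uncurry fun x v : unitInterval => f (x, v)) :=
        hc.stronglyMeasurable
      exact h.integral_prod_right.measurable
    · exact integral_nonneg fun v => hf.nonneg _
    · exact (integral_fiber _ (hint x)).trans (hf.row x)
    · simp only [g]
      rw [integral_integral_swap]
      · simp only [hf.col, integral_const, smul_eq_mul, mul_one]
        rw [measureReal_restrict_apply_univ, gridIdx_vol]
      · exact Integrable.of_bound hc.aestronglyMeasurable C (ae_of_all _ fun v => hC _)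
  let F : ℕ → Sq → ℝ := fun n => stepK n.succ_pos (g n)
  have hF : ∀ n, FairlyDistributed (F n) := fun n => stepK_fair _ (hg n)
  have key : ∀ (n : ℕ) (p : Sq) (a D : ℝ), (∀ v : unitInterval, |(v : ℝ) - p.2| ≤ 1 / ((n : ℝ) + 1) → |f (p.1, v) - a| ≤ D) →
      |F n p - a| ≤ D := by
    intro n p a D h
    have hn : (0 : ℝ) < (n : ℝ) + 1 := by positivity
    have h1 : F n p - a = ((n : ℝ) + 1) *
        ∫ v in gridIdx (n + 1) n.succ_pos ⁻¹' {gridIdx (n + 1) n.succ_pos p.2}, (f (p.1, v) - a) := by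
      rw [integral_sub (hint _).integrableOn (integrable_const _), setIntegral_const, gridIdx_vol]
      simp only [F, stepK, g]
      push_cast
      rw [smul_eq_mul]
      field_simp
    have h2 := norm_setIntegral_le_of_norm_le_const (μ := (volume : Measure unitInterval))
      (s := gridIdx (n + 1) n.succ_pos ⁻¹' {gridIdx (n + 1) n.succ_pos p.2})
      (f := fun v => f (p.1, v) - a) (C := D) (measure_lt_top _ _) (fun v hv => by
        apply h
        have b1 := gridIdx_bounds n.succ_pos v
        have b2 := gridIdx_bounds n.succ_pos p.2
        rw [show gridIdx (n + 1) n.succ_pos v = _ from hv] at b1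
        rw [add_div] at b1 b2
        push_cast at b1 b2
        rw [abs_le]
        constructor <;> linarith)
    rw [gridIdx_vol] at h2
    rw [h1, abs_mul, abs_of_pos hn]
    refine (mul_le_mul_of_nonneg_left h2 hn.le).trans (le_of_eq ?_)
    push_cast
    field_simp
  have hFC : ∀ n p, |F n p| ≤ C := fun n p => by
    have := key n p 0 C (fun v _ => by rw [sub_zero]; exact hC _)
    rwa [sub_zero] at this
  have hFl : ∀ p, Tendsto (fun n => F n p) atTop (𝓝 (f p)) := by
    intro p
    rw [Metric.tendsto_atTop]
    intro ε hε
    have hcp : ContinuousAt (fun v => f (p.1, v)) p.2 := (by fun_prop : Continuous _).continuousAt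
    obtain ⟨δ, hδ, hd⟩ := Metric.continuousAt_iff.1 hcp (ε / 2) (half_pos hε)
    obtain ⟨N, hN⟩ := exists_nat_one_div_lt hδ
    refine ⟨N, fun n hn => ?_⟩
    rw [Real.dist_eq]
    refine lt_of_le_of_lt (key n p _ (ε / 2) fun v hv => ?_) (half_lt_self hε)
    refine (hd (x := v) ?_).le
    rw [Subtype.dist_eq, Real.dist_eq]
    refine (hv.trans ?_).trans_lt hN
    exact one_div_le_one_div_of_le (by positivity) (by gcongr)
  choose νn hνn using fun n => exists_sg (hF n) μ
  refine mem_closure_of_tendsto (f := νn) (b := atTop) ?_ (Eventually.of_forall fun n => ?_)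
  · refine sg_tendsto (fun n => measurable_phi (hF n).measurable μ) (measurable_phi hf.measurable μ)
      (C * C) (fun n p => phi_le hC0 (hFC n) μ p) (ae_of_all _ fun p => ?_) hνn hν
    refine tendsto_integral_of_dominated_convergence (fun _ => C * C) (fun n => ?_)
      (integrable_const _) (fun n => ae_of_all _ fun q => ?_) (ae_of_all _ fun q => ?_)
    · have := (hF n).measurable
      exact (by fun_prop : Measurable _).aestronglyMeasurable
    · rw [norm_mul]
      exact mul_le_mul (hFC _ _) (hFC _ _) (norm_nonneg _) hC0
    · exact (hFl _).mul (hFl _)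
  · simp only [Set.mem_iUnion]
    refine ⟨n + 1, n.succ_pos, Matrix.of fun i j => ∫ p, g n i p.1 * g n j p.2 ∂μ.toMeasure,
      subset_closure ⟨g n, hg n, fun i j => rfl⟩, ?_⟩
    rw [hνn, stepK_phi n.succ_pos (g n)]
    exact fun i j => rfl

lemma dir2 (μ : SGraphon) {k : ℕ} (hk : 0 < k) {M : Matrix (Fin k) (Fin k) ℝ}
    (hM : M ∈ kShape μ.toMeasure k) {ν : SGraphon} (hν : ν.toMeasure = muM M) :
    ν ∈ shape μ := by
  have hk' : (0 : ℝ) < k := by exact_mod_cast hk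
  -- continuous fractional partitions suffice
  have hM' : M ∈ closure {M : Matrix (Fin k) (Fin k) ℝ | ∃ f : Fin k → unitInterval → ℝ,
      (IsFracPartition k f ∧ ∀ i, Continuous (f i)) ∧
      ∀ i j, M i j = ∫ p, f i p.1 * f j p.2 ∂μ.toMeasure} := by
    refine closure_minimal ?_ isClosed_closure hM
    rintro N ⟨f, hf, hN⟩
    obtain ⟨g, hg, hgc, hgl⟩ := approxP hk
      (μ.toMeasure.map Prod.fst + μ.toMeasure.map Prod.snd) hf
    rw [ae_add_measure_iff] at hgl
    have l1 := ae_of_ae_map measurable_fst.aemeasurable hgl.1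
    have l2 := ae_of_ae_map measurable_snd.aemeasurable hgl.2
    refine mem_closure_of_tendsto (b := atTop)
      (f := fun n => Matrix.of fun i j => ∫ p, g n i p.1 * g n j p.2 ∂μ.toMeasure) ?_
      (Eventually.of_forall fun n => ⟨g n, ⟨hg n, hgc n⟩, fun i j => rfl⟩)
    refine tendsto_pi_nhds.2 fun i => tendsto_pi_nhds.2 fun j => ?_
    rw [hN]
    refine tendsto_integral_of_dominated_convergence (fun _ => 1) (fun n => ?_)
      (integrable_const _) (fun n => ae_of_all _ fun q => ?_) ?_
    · have h1 := hgc n i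
      have h2 := hgc n j
      exact (by fun_prop : Continuous _).aestronglyMeasurable
    · rw [norm_mul]
      exact mul_le_one₀ (fp_le (hg n) _ _) (norm_nonneg _) (fp_le (hg n) _ _)
    · filter_upwards [l1, l2] with q h1 h2
      exact (h1 i).mul (h2 j)
  have : FrechetUrysohnSpace (Matrix (Fin k) (Fin k) ℝ) :=
    inferInstanceAs (FrechetUrysohnSpace (Fin k → Fin k → ℝ))
  obtain ⟨Mn, hMn, hMl⟩ := mem_closure_iff_seq_limit.1 hM'
  choose g hgp hgM using hMn
  -- the indicator partition
  have hind : IsFracPartition k (fun i u => if gridIdx k hk u = i then (1 : ℝ) else 0) := by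
    refine ⟨fun i => ?_, fun i x => ?_, fun x => ?_, fun i => ?_⟩
    · exact Measurable.ite (gridIdx_measurable hk (measurableSet_singleton i))
        measurable_const measurable_const
    · dsimp only; split_ifs <;> norm_num
    · simp
    · rw [integral_step hk (fun j => if j = i then (1 : ℝ) else 0)]
      simp
  obtain ⟨e, he, hec, hel⟩ := approxP hk (volume : Measure unitInterval) hind
  let F : ℕ → Sq → ℝ := fun n p => ∑ i, g n i p.1 * (k * e n i p.2)
  have hFc : ∀ n, Continuous (F n) := fun n => by
    have h1 := (hgp n).2
    have h2 := hec n
    exact continuous_finsetSum _ fun i _ => ((h1 i).comp continuous_fst).mul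
      (continuous_const.mul ((h2 i).comp continuous_snd))
  have hie : ∀ n i, Integrable (e n i) := fun n i => Integrable.of_bound
    (hec n i).aestronglyMeasurable 1 (ae_of_all _ fun x => fp_le (he n) i x)
  have hig : ∀ n i, Integrable (g n i) := fun n i => Integrable.of_bound
    ((hgp n).2 i).aestronglyMeasurable 1 (ae_of_all _ fun x => fp_le (hgp n).1 i x)
  have hF : ∀ n, FairlyDistributed (F n) := fun n => by
    refine ⟨(hFc n).measurable, fun p => ?_, ?_, fun x => ?_, fun y => ?_⟩
    · exact Finset.sum_nonneg fun i _ => mul_nonneg ((hgp n).1.2.1 i _)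
        (mul_nonneg hk'.le ((he n).2.1 i _))
    · obtain ⟨C, hC⟩ := (isCompact_range (hFc n)).bddAbove
      exact ⟨C, fun p => hC ⟨p, rfl⟩⟩
    · simp only [F]
      rw [integral_finsetSum _ fun i _ => ((hie n i).const_mul _).const_mul _]
      simp only [integral_const_mul, (he n).2.2.2]
      rw [← Finset.sum_mul, (hgp n).1.2.2.1]
      field_simp
    · simp only [F]
      rw [integral_finsetSum _ fun i _ => (hig n i).mul_const _]
      simp only [integral_mul_const, (hgp n).1.2.2.2]
      rw [← Finset.mul_sum, ← Finset.mul_sum, (he n).2.2.1]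
      field_simp
  let d : ℕ → Sq → ℝ := fun n p => ∑ i, ∑ j, Mn n i j * ((k * e n i p.1) * (k * e n j p.2))
  have hphi : ∀ n p, phiFn (F n) μ.toMeasure p = d n p := by
    intro n p
    simp only [phiFn, F, d, Finset.sum_mul_sum]
    have hint : ∀ i j, Integrable (fun q : Sq => g n i q.1 * (k * e n i p.1) *
        (g n j q.2 * (k * e n j p.2))) μ.toMeasure := fun i j => by
      have h1 := (hgp n).2 i
      have h2 := (hgp n).2 j
      exact (by fun_prop : Continuous _).integrable_of_hasCompactSupport
        (HasCompactSupport.of_compactSpace _)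
    rw [integral_finsetSum _ fun i _ => integrable_finsetSum _ fun j _ => hint i j]
    refine Finset.sum_congr rfl fun i _ => ?_
    rw [integral_finsetSum _ fun j _ => hint i j]
    refine Finset.sum_congr rfl fun j _ => ?_
    rw [hgM, ← integral_mul_const]
    congr 1
    ext q
    ring
  have hMb : ∀ n i j, |Mn n i j| ≤ 1 := fun n i j => by
    rw [hgM]
    have := norm_integral_le_of_norm_le_const (μ := μ.toMeasure) (C := 1)
      (f := fun p => g n i p.1 * g n j p.2) (ae_of_all _ fun q => by
        rw [norm_mul]
        exact mul_le_one₀ (fp_le (hgp n).1 _ _) (norm_nonneg _) (fp_le (hgp n).1 _ _))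
    simpa using this
  choose νn hνn using fun n => exists_sg (hF n) μ
  refine mem_closure_of_tendsto (f := νn) (b := atTop) ?_
    (Eventually.of_forall fun n => ⟨F n, hF n, hFc n, hνn n⟩)
  rw [muM, dif_pos hk] at hν
  refine sg_tendsto (d := d) (d0 := fun p => (k : ℝ) ^ 2 * M (gridIdx k hk p.1) (gridIdx k hk p.2))
    (fun n => ?_) ?_ (∑ _i : Fin k, ∑ _j : Fin k, 1 * ((k * 1) * (k * 1)))
    (fun n p => ?_) ?_ (fun n => ?_) hν
  · have := hec n
    have h : Continuous (d n) := by
      refine continuous_finsetSum _ fun i _ => continuous_finsetSum _ fun j _ => ?_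
      have h1 := hec n i
      have h2 := hec n j
      fun_prop
    exact h.measurable
  · have h : Measurable (fun z : Fin k × Fin k => M z.1 z.2) := measurable_of_finite _
    exact (h.comp (((gridIdx_measurable hk).comp measurable_fst).prodMk
      ((gridIdx_measurable hk).comp measurable_snd))).const_mul _
  · refine (Finset.abs_sum_le_sum_abs _ _).trans (Finset.sum_le_sum fun i _ => ?_)
    refine (Finset.abs_sum_le_sum_abs _ _).trans (Finset.sum_le_sum fun j _ => ?_)
    rw [abs_mul, abs_mul, abs_mul, abs_mul, abs_of_pos hk']
    have h1 := hMb n i j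
    have h2 := fp_le (he n) i p.1
    have h3 := fp_le (he n) j p.2
    gcongr
  · have l1 : ∀ᵐ p : Sq, ∀ i, Tendsto (fun n => e n i p.1) atTop
        (𝓝 (if gridIdx k hk p.1 = i then (1 : ℝ) else 0)) :=
      Measure.quasiMeasurePreserving_fst.ae hel
    have l2 : ∀ᵐ p : Sq, ∀ i, Tendsto (fun n => e n i p.2) atTop
        (𝓝 (if gridIdx k hk p.2 = i then (1 : ℝ) else 0)) :=
      Measure.quasiMeasurePreserving_snd.ae hel
    filter_upwards [l1, l2] with p h1 h2
    have hij : ∀ i j, Tendsto (fun n => Mn n i j) atTop (𝓝 (M i j)) := fun i j =>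
      tendsto_pi_nhds.1 (tendsto_pi_nhds.1 hMl i) j
    have := tendsto_finsetSum Finset.univ fun i _ => tendsto_finsetSum Finset.univ fun j _ =>
      (hij i j).mul (((h1 i).const_mul (k : ℝ)).mul ((h2 j).const_mul (k : ℝ)))
    convert this using 2
    simp
    ring
  · rw [hνn, PhiMeas]
    simp only [hphi]

/-- Lemma `lem:shapes-a`. For every s-graphon `μ`, the shape `C(μ)` equals the
weak closure of the union of the sets `C̃(μ,k) = {μ_M : M ∈ C(μ,k)}`, `k ∈ ℕ`. -/
theorem stmt1 (μ : SGraphon) :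
    shape μ = closure (⋃ k ∈ {k : ℕ | 0 < k}, kShapeTilde μ.toMeasure k) := by
  apply Set.Subset.antisymm
  · refine closure_minimal ?_ isClosed_closure
    rintro ν ⟨f, hf, hc, hν⟩
    exact dir1 μ hf hc hν
  · refine closure_minimal ?_ isClosed_closure
    intro ν hν
    simp only [Set.mem_iUnion] at hν
    obtain ⟨k, hk, M, hM, h⟩ := hν
    exact dir2 μ hk hM h

end
end
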